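/- arXiv:2112.01647 — 2 statements merged into one kernel-verified Lean document; each statement's English description precedes it below -/
import Mathlib

section
/- There is a universal constant δ₀ ∈ (0,1) such that for every ε ∈ (0,1) there is d₀(ε) with the following property: for every integer d ≥ d₀(ε), all sufficiently large n, every integer ℓ with 2 ≤ ℓ ≤ exp(n^{δ₀}), and every transitive abelian subgroup H of Sym(ℓ), there exist a d-regular graph G₀ on n' vertices with n ≤ n' ≤ 2n and an (H,ℓ)-signing s of G₀ such that the lifted graph G = G₀(s) is d-regular on n'·ℓ vertices and satisfies λ(G) ≤ ε·d. -/
open scoped Classical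

noncomputable section

/-- The `(H,ℓ)`-lift of a graph `G` under an edge-signing `s` valued in permutations of
`Fin ℓ`: the vertex `(u, i)` is joined to `(v, s u v • i)` for each edge `{u, v}` of `G`
(the signing is extended to both orientations by `s v u = (s u v)⁻¹`). -/
def liftGraph {V : Type*} {ℓ : ℕ} (G : SimpleGraph V) (s : V → V → Equiv.Perm (Fin ℓ)) :
    SimpleGraph (V × Fin ℓ) :=
  SimpleGraph.fromRel (fun p q => G.Adj p.1 q.1 ∧ q.2 = s p.1 q.1 p.2)

/-- `λ(G) ≤ b` for a `d`-regular graph with adjacency matrix `A`: every eigenvalue other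
than the trivial one (on the constant vectors) has absolute value at most `b`, expressed
via the Rayleigh quotient of `A` on mean-zero vectors. -/
def SndEigLE {V : Type*} [Fintype V] (A : Matrix V V ℝ) (b : ℝ) : Prop :=
  ∀ f : V → ℝ, (∑ v, f v) = 0 →
    |dotProduct f (A.mulVec f)| ≤ b * (∑ v, (f v) ^ 2)


/-!
The base graph `G₀` is a random lift of the complete graph `K_{d+1}`, signed by uniformly random
elements of `H`. A transitive abelian group acts regularly, so the Fourier transform over `H`
splits the quadratic form of the lift into forms on `G₀` whose edges are weighted by the characters
of `H`: the trivial character sees the spectrum of `G₀` itself, the others see a random weighting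
with mean zero. In either case the few large coordinates of a vector contribute little, because
small vertex sets of `G₀` span few edges, and on vectors with bounded coordinates the form is
controlled by its `∞ → 1` norm, for which a Chernoff bound survives the union bound over sign
vectors and over all `|H| ≤ exp n` characters.
-/

section FiniteAverages

open Finset
open scoped BigOperators

variable {Ω : Type*} [Fintype Ω]

/-- The probability of the event `P` under the uniform distribution on the finite type `Ω`
(equal to `0` when `Ω` is empty). -/
def uniformProb (P : Ω → Prop) : ℝ := 𝔼 ω, if P ω then 1 else 0

theorem uniformProb_eq_card_div (P : Ω → Prop) [DecidablePred P] :
    uniformProb P = #{ω | P ω} / Fintype.card Ω := by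
  rw [uniformProb, Fintype.expect_eq_sum_div_card, card_filter, Nat.cast_sum]
  congr! with ω
  split_ifs <;> simp

theorem uniformProb_mono {P Q : Ω → Prop} (hPQ : ∀ ω, P ω → Q ω) :
    uniformProb P ≤ uniformProb Q := by
  refine expect_le_expect fun ω _ => ?_
  split_ifs with hP hQ
  exacts [le_rfl, absurd (hPQ ω hP) hQ, zero_le_one, le_rfl]

theorem exists_not_of_uniformProb_lt_one [Nonempty Ω] {P : Ω → Prop} (hP : uniformProb P < 1) :
    ∃ ω, ¬ P ω := by
  by_contra! hall
  simp [uniformProb, hall] at hP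

theorem uniformProb_exists_mem_le {ι : Type*} (s : Finset ι) (P : ι → Ω → Prop) :
    uniformProb (fun ω => ∃ i ∈ s, P i ω) ≤ ∑ i ∈ s, uniformProb (P i) := by
  unfold uniformProb
  rw [← expect_sum_comm]
  refine expect_le_expect fun ω _ => ?_
  have hnonneg : ∀ i ∈ s, (0 : ℝ) ≤ if P i ω then 1 else 0 := fun i _ => by positivity
  split_ifs with hex
  · obtain ⟨i, hi, hPi⟩ := hex
    simpa [hPi] using single_le_sum hnonneg hi
  · exact sum_nonneg hnonneg

theorem uniformProb_exists_le {ι : Type*} [Fintype ι] {P : ι → Ω → Prop} {b : ℝ}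
    (hP : ∀ i, uniformProb (P i) ≤ b) :
    uniformProb (fun ω => ∃ i, P i ω) ≤ Fintype.card ι * b := by
  simpa using (uniformProb_exists_mem_le univ P).trans (sum_le_card_nsmul _ _ b fun i _ => hP i)

theorem uniformProb_or_le (P Q : Ω → Prop) :
    uniformProb (fun ω => P ω ∨ Q ω) ≤ uniformProb P + uniformProb Q := by
  unfold uniformProb
  rw [← expect_add_distrib]
  refine expect_le_expect fun ω _ => ?_
  by_cases hP : P ω <;> by_cases hQ : Q ω <;> simp [hP, hQ]

theorem uniformProb_lt_le_exp_mul_expect (X : Ω → ℝ) (B : ℝ) {t : ℝ} (ht : 0 ≤ t) :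
    uniformProb (fun ω => B < X ω) ≤ Real.exp (-(t * B)) * 𝔼 ω, Real.exp (t * X ω) := by
  rw [mul_expect]
  refine expect_le_expect fun ω _ => ?_
  rw [← Real.exp_add]
  split_ifs with hB
  · exact Real.one_le_exp (by nlinarith)
  · positivity

theorem expect_pi_prod {ι : Type*} [Fintype ι] [DecidableEq ι] {α : ι → Type*}
    [∀ i, Fintype (α i)] (g : ∀ i, α i → ℝ) : 𝔼 ω : ∀ i, α i, ∏ i, g i (ω i) = ∏ i, 𝔼 a, g i a := by
  simp only [Fintype.expect_eq_sum_div_card, prod_div_distrib, prod_univ_sum, Fintype.card_pi,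
    Fintype.piFinset_univ, Nat.cast_prod]

theorem uniformProb_pi_forall {ι : Type*} [Fintype ι] [DecidableEq ι] {α : ι → Type*}
    [∀ i, Fintype (α i)] (P : ∀ i, α i → Prop) :
    uniformProb (fun ω : ∀ i, α i => ∀ i, P i (ω i)) = ∏ i, uniformProb (P i) := by
  simp only [uniformProb, ← expect_pi_prod, prod_boole, mem_univ, true_implies]
  exact expect_congr rfl fun ω _ => by congr

theorem expect_exp_mul_le {α : Type*} [Fintype α] {g : α → ℝ} {C : ℝ} (t : ℝ)
    (hmean : 𝔼 a, g a = 0) (hC : ∀ a, |g a| ≤ C) :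
    𝔼 a, Real.exp (t * g a) ≤ Real.exp (t ^ 2 * C ^ 2 / 2) := by
  rcases isEmpty_or_nonempty α with hempty | hne
  · simpa using (Real.exp_pos _).le
  let _ : MeasurableSpace α := ⊤
  have integral_eq : ∀ f : α → ℝ, ∫ a, f a ∂(PMF.uniformOfFintype α).toMeasure = 𝔼 a, f a := by
    intro f
    rw [PMF.integral_eq_sum, Fintype.expect_eq_sum_div_card, sum_div]
    simp [div_eq_inv_mul]
  have hsub := ProbabilityTheory.hasSubgaussianMGF_of_mem_Icc_of_integral_eq_zero
    (X := g) (a := -C) (b := C) (μ := (PMF.uniformOfFintype α).toMeasure)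
    measurable_from_top.aemeasurable (.of_forall fun a => abs_le.1 (hC a))
    ((integral_eq g).trans hmean)
  refine (integral_eq _).symm.le.trans ((hsub.mgf_le t).trans_eq ?_)
  congr 1
  push_cast
  rw [div_pow, Real.norm_eq_abs, sq_abs]
  ring

end FiniteAverages

section RandomPermutations

open Finset Equiv
open scoped BigOperators

theorem expect_perm_succ {m : ℕ} (F : Perm (Fin (m + 1)) → ℝ) :
    𝔼 π, F π = 𝔼 p : Fin (m + 1), 𝔼 σ : Perm (Fin m), F (Perm.decomposeFin.symm (p, σ)) := by
  rw [← Fintype.expect_equiv Perm.decomposeFin.symm _ F fun _ => rfl, ← univ_product_univ,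
    expect_product]

theorem abs_expect_le_one {α : Type*} [Fintype α] {x : α → ℝ} (hx : ∀ i, |x i| ≤ 1) :
    |𝔼 i, x i| ≤ 1 := by
  rcases isEmpty_or_nonempty α with hempty | hne
  · simp
  · exact (abs_expect_le _ _).trans (expect_le univ_nonempty fun i _ => hx i)

-- Conditionally on `π 0 = p` the exponent has mean `(∑ i, x i) * 𝔼 y + (y p - 𝔼 y) * z` for a
-- constant `z`, so each step of the induction costs one application of Hoeffding's lemma.
theorem sum_mul_decomposeFin {m : ℕ} (x y : Fin (m + 1) → ℝ) (p : Fin (m + 1)) :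
    x 0 * y p + (∑ i : Fin m, x i.succ) * 𝔼 i : Fin m, y (swap 0 p i.succ) =
      (∑ i, x i) * 𝔼 i, y i + (y p - 𝔼 i, y i) * (x 0 - 𝔼 i : Fin m, x i.succ) := by
  have sum_y : ∑ i : Fin m, y (swap 0 p i.succ) = (m + 1) * 𝔼 i, y i - y p := by
    have := Equiv.sum_comp (swap 0 p) y
    rw [Fin.sum_univ_succ, swap_apply_left] at this
    have mean_y := Fintype.card_mul_expect y
    rw [Fintype.card_fin, Nat.cast_add_one] at mean_y
    linarith
  have sum_x : (∑ i : Fin m, x i.succ) = m * 𝔼 i : Fin m, x i.succ := by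
    simpa using (Fintype.card_mul_expect fun i : Fin m => x i.succ).symm
  have mean_y : (m : ℝ) * 𝔼 i : Fin m, y (swap 0 p i.succ) = (m + 1) * 𝔼 i, y i - y p := by
    rw [← sum_y]
    simpa using Fintype.card_mul_expect fun i : Fin m => y (swap 0 p i.succ)
  rw [Fin.sum_univ_succ, sum_x]
  linear_combination (𝔼 i : Fin m, x i.succ) * mean_y

theorem expect_perm_exp_sum_mul_le (t : ℝ) {m : ℕ} {x y : Fin m → ℝ} (hx : ∀ i, |x i| ≤ 1)
    (hy : ∀ i, |y i| ≤ 1) :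
    𝔼 π : Perm (Fin m), Real.exp (t * ∑ i, x i * y (π i)) ≤
      Real.exp (t * ((∑ i, x i) * 𝔼 i, y i) + 8 * t ^ 2 * m) := by
  induction m with
  | zero => simp
  | succ m ih =>
    set z := x 0 - 𝔼 i : Fin m, x i.succ
    have hz : |z| ≤ 2 := by
      linarith [abs_sub (x 0) (𝔼 i : Fin m, x i.succ), hx 0,
        abs_expect_le_one fun i : Fin m => hx i.succ]
    have conditional : ∀ p : Fin (m + 1), 𝔼 σ : Perm (Fin m),
        Real.exp (t * ∑ i, x i * y (Perm.decomposeFin.symm (p, σ) i)) ≤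
          Real.exp (t * ((∑ i, x i) * 𝔼 i, y i) + 8 * t ^ 2 * m) *
            Real.exp (t * ((y p - 𝔼 i, y i) * z)) := by
      intro p
      have hih := ih (fun i => hx i.succ) (fun i => hy (swap 0 p i.succ))
      simp only [Fin.sum_univ_succ, mul_add, Real.exp_add, Perm.decomposeFin_symm_apply_zero,
        Perm.decomposeFin_symm_apply_succ, ← mul_expect] at hih ⊢
      refine (mul_le_mul_of_nonneg_left hih (Real.exp_pos _).le).trans_eq ?_
      simp only [← Real.exp_add]
      congr 1
      have := sum_mul_decomposeFin x y p
      rw [Fin.sum_univ_succ] at this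
      linear_combination t * this
    have centred : 𝔼 p, (y p - 𝔼 i, y i) * z = 0 := by
      rw [← expect_mul, expect_sub_distrib, Fintype.expect_const, sub_self, zero_mul]
    have bounded : ∀ p, |(y p - 𝔼 i, y i) * z| ≤ 4 := by
      intro p
      have hy2 : |y p - 𝔼 i, y i| ≤ 2 := by
        linarith [abs_sub (y p) (𝔼 i, y i), hy p, abs_expect_le_one hy]
      rw [abs_mul]
      nlinarith [abs_nonneg z, abs_nonneg (y p - 𝔼 i, y i)]
    rw [expect_perm_succ]
    refine (expect_le_expect fun p _ => conditional p).trans ?_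
    rw [← mul_expect]
    refine (mul_le_mul_of_nonneg_left (expect_exp_mul_le t centred bounded)
      (Real.exp_pos _).le).trans_eq ?_
    rw [← Real.exp_add, Nat.cast_add_one]
    ring_nf

theorem pow_mul_factorial_le_pow_mul_descFactorial {m j : ℕ} (hj : j ≤ m) :
    m ^ j * j.factorial ≤ j ^ j * m.descFactorial j := by
  rw [← Nat.descFactorial_self j]
  simp only [Nat.descFactorial_eq_prod_range, pow_eq_prod_const, ← prod_mul_distrib]
  refine prod_le_prod' fun i hi => ?_
  obtain ⟨a, rfl⟩ := Nat.exists_eq_add_of_lt (mem_range.1 hi)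
  obtain ⟨b, rfl⟩ := Nat.exists_eq_add_of_le hj
  rw [show i + a + 1 - i = a + 1 by omega, show i + a + 1 + b - i = a + 1 + b by omega]
  nlinarith [Nat.zero_le (i * b)]

theorem pow_le_exp_one_pow_mul_descFactorial {m j : ℕ} (hj : j ≤ m) :
    (m : ℝ) ^ j ≤ Real.exp 1 ^ j * m.descFactorial j := by
  have stirling : (j : ℝ) ^ j ≤ Real.exp 1 ^ j * j.factorial := by
    have := Real.pow_div_factorial_le_exp (j : ℝ) (by positivity) j
    rwa [div_le_iff₀ (by positivity), ← mul_one (j : ℝ), Real.exp_nat_mul, mul_one] at this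
  have hfact : (0 : ℝ) < j.factorial := by positivity
  refine le_of_mul_le_mul_right ?_ hfact
  calc (m : ℝ) ^ j * j.factorial ≤ j ^ j * m.descFactorial j := by
        exact_mod_cast pow_mul_factorial_le_pow_mul_descFactorial hj
    _ ≤ Real.exp 1 ^ j * j.factorial * m.descFactorial j := by gcongr
    _ = _ := by ring

variable {α : Type*}

theorem card_image_fst_eq_of_extending [DecidableEq α] {F : Finset (α × α)} {π₀ : Perm α}
    (hπ₀ : ∀ p ∈ F, π₀ p.1 = p.2) : #(F.image Prod.fst) = #F :=
  card_image_of_injOn fun p hp q hq hpq =>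
    Prod.ext hpq (by rw [← hπ₀ p hp, ← hπ₀ q hq]; exact congrArg π₀ hpq)

theorem card_perm_extending_le [Fintype α] [DecidableEq α] {F : Finset (α × α)} {π₀ : Perm α}
    (hπ₀ : ∀ p ∈ F, π₀ p.1 = p.2) :
    #{π : Perm α | ∀ p ∈ F, π p.1 = p.2} ≤ (Fintype.card α - #F).factorial := by
  set I := F.image Prod.fst
  have card_fixing : (Fintype.card α - #F).factorial = #{π : Perm α | ∀ i, ¬ i ∉ I → π i = i} := by
    rw [← Fintype.card_subtype, ← Fintype.card_congr (Perm.subtypeEquivSubtypePerm (· ∉ I)),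
      Fintype.card_perm, Fintype.card_subtype_compl, Fintype.card_coe,
      card_image_fst_eq_of_extending hπ₀]
  rw [card_fixing]
  refine card_le_card_of_injOn (fun π => π₀⁻¹ * π) (fun π hπ => ?_)
    (fun π _ π' _ hππ' => mul_left_cancel hππ')
  simp only [coe_filter_univ, Set.mem_ofPred_eq, not_not] at hπ ⊢
  intro i hi
  obtain ⟨p, hp, rfl⟩ := mem_image.1 hi
  rw [Perm.mul_apply, hπ p hp, Perm.inv_eq_iff_eq, hπ₀ p hp]

theorem uniformProb_perm_extending_le [Fintype α] [DecidableEq α] (F : Finset (α × α)) :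
    uniformProb (fun π : Perm α => ∀ p ∈ F, π p.1 = p.2) ≤
      (Real.exp 1 / Fintype.card α) ^ #F := by
  rw [uniformProb_eq_card_div, Fintype.card_perm]
  rcases ({π : Perm α | ∀ p ∈ F, π p.1 = p.2} : Finset _).eq_empty_or_nonempty with
    hempty | ⟨π₀, hπ₀⟩
  · rw [hempty, card_empty, Nat.cast_zero, zero_div]
    positivity
  replace hπ₀ := (mem_filter.1 hπ₀).2
  have hF : #F ≤ Fintype.card α :=
    card_image_fst_eq_of_extending hπ₀ ▸ card_le_univ (F.image Prod.fst)
  have hdesc : (0 : ℝ) < (Fintype.card α).descFactorial #F := by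
    exact_mod_cast Nat.descFactorial_pos.2 hF
  have hpow : (0 : ℝ) < (Fintype.card α : ℝ) ^ #F := by
    exact_mod_cast (Nat.descFactorial_pos.2 hF).trans_le (Nat.descFactorial_le_pow _ _)
  calc _ ≤ ((Fintype.card α - #F).factorial : ℝ) / (Fintype.card α).factorial := by
        gcongr
        exact card_perm_extending_le hπ₀
    _ = 1 / (Fintype.card α).descFactorial #F := by
        rw [← Nat.factorial_mul_descFactorial hF]
        push_cast
        field_simp
    _ ≤ _ := by
        rw [div_pow, div_le_div_iff₀ hdesc hpow, one_mul]
        exact pow_le_exp_one_pow_mul_descFactorial hF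

end RandomPermutations

section InfOneNorm

open Finset Matrix
open scoped BigOperators

variable {U V : Type*} [Fintype U] [Fintype V]

/-- The `∞ → 1` norm of `M` is at most `B`. Since `x ⬝ᵥ M *ᵥ y` is affine in each coordinate of
`x` and of `y`, it is enough to test vectors of signs. -/
def InfOneLE (M : Matrix U V ℝ) (B : ℝ) : Prop :=
  ∀ (x : U → SignType) (y : V → SignType), (fun u => (x u : ℝ)) ⬝ᵥ M *ᵥ (fun v => (y v : ℝ)) ≤ B

theorem dotProduct_le_mul_sign_dotProduct {x : V → ℝ} {R : ℝ} (hx : ∀ v, |x v| ≤ R) (z : V → ℝ) :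
    x ⬝ᵥ z ≤ R * ((fun v => (SignType.sign (z v) : ℝ)) ⬝ᵥ z) := by
  rw [dotProduct, dotProduct, mul_sum]
  refine sum_le_sum fun v _ => ?_
  rw [sign_mul_self]
  exact (le_abs_self _).trans ((abs_mul _ _).trans_le
    (mul_le_mul_of_nonneg_right (hx v) (abs_nonneg _)))

namespace InfOneLE

theorem dotProduct_mulVec_le {M : Matrix U V ℝ} {B R : ℝ} (hM : InfOneLE M B) (hR : 0 ≤ R)
    {x : U → ℝ} {y : V → ℝ} (hx : ∀ u, |x u| ≤ R) (hy : ∀ v, |y v| ≤ R) :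
    x ⬝ᵥ M *ᵥ y ≤ B * R ^ 2 := by
  have transpose_form : ∀ (a : U → ℝ) (b : V → ℝ), a ⬝ᵥ M *ᵥ b = b ⬝ᵥ Mᵀ *ᵥ a := fun a b => by
    rw [dotProduct_mulVec, mulVec_transpose, dotProduct_comm]
  set x' : U → SignType := fun u => SignType.sign ((M *ᵥ y) u)
  set y' : V → SignType := fun v => SignType.sign ((Mᵀ *ᵥ fun u => (x' u : ℝ)) v)
  calc x ⬝ᵥ M *ᵥ y ≤ R * ((fun u => (x' u : ℝ)) ⬝ᵥ M *ᵥ y) :=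
        dotProduct_le_mul_sign_dotProduct hx _
    _ = R * (y ⬝ᵥ Mᵀ *ᵥ fun u => (x' u : ℝ)) := by rw [transpose_form]
    _ ≤ R * (R * ((fun v => (y' v : ℝ)) ⬝ᵥ Mᵀ *ᵥ fun u => (x' u : ℝ))) :=
        mul_le_mul_of_nonneg_left (dotProduct_le_mul_sign_dotProduct hy _) hR
    _ = R ^ 2 * ((fun u => (x' u : ℝ)) ⬝ᵥ M *ᵥ fun v => (y' v : ℝ)) := by
        rw [transpose_form]; ring
    _ ≤ B * R ^ 2 := by
        rw [mul_comm B]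
        exact mul_le_mul_of_nonneg_left (hM x' y') (sq_nonneg R)

theorem abs_dotProduct_mulVec_le {M : Matrix U V ℝ} {B R : ℝ} (hM : InfOneLE M B) (hR : 0 ≤ R)
    {x : U → ℝ} {y : V → ℝ} (hx : ∀ u, |x u| ≤ R) (hy : ∀ v, |y v| ≤ R) :
    |x ⬝ᵥ M *ᵥ y| ≤ B * R ^ 2 := by
  have hneg := hM.dotProduct_mulVec_le hR (x := -x) (fun u => by simpa using hx u) hy
  rw [neg_dotProduct] at hneg
  exact abs_le'.2 ⟨hM.dotProduct_mulVec_le hR hx hy, hneg⟩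

theorem norm_dotProduct_mulVec_le {W : Matrix U V ℂ} {B R : ℝ}
    (hre : InfOneLE (W.map Complex.re) B) (him : InfOneLE (W.map Complex.im) B) (hR : 0 ≤ R)
    {x : U → ℂ} {y : V → ℂ} (hx : ∀ u, ‖x u‖ ≤ R) (hy : ∀ v, ‖y v‖ ≤ R) :
    ‖x ⬝ᵥ W *ᵥ y‖ ≤ 8 * (B * R ^ 2) := by
  set xr : U → ℝ := fun u => (x u).re with hxr
  set xi : U → ℝ := fun u => (x u).im with hxi
  set yr : V → ℝ := fun v => (y v).re with hyr
  set yi : V → ℝ := fun v => (y v).im with hyi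
  have form_re : (x ⬝ᵥ W *ᵥ y).re = xr ⬝ᵥ W.map Complex.re *ᵥ yr - xr ⬝ᵥ W.map Complex.im *ᵥ yi
      - xi ⬝ᵥ W.map Complex.re *ᵥ yi - xi ⬝ᵥ W.map Complex.im *ᵥ yr := by
    simp only [dotProduct, mulVec, Complex.re_sum, Complex.im_sum, Complex.mul_re, Complex.mul_im,
      map_apply, sum_sub_distrib, sum_add_distrib, mul_sub, mul_add, hxr, hxi, hyr, hyi]
    ring
  have form_im : (x ⬝ᵥ W *ᵥ y).im = xr ⬝ᵥ W.map Complex.re *ᵥ yi + xr ⬝ᵥ W.map Complex.im *ᵥ yr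
      + xi ⬝ᵥ W.map Complex.re *ᵥ yr - xi ⬝ᵥ W.map Complex.im *ᵥ yi := by
    simp only [dotProduct, mulVec, Complex.re_sum, Complex.im_sum, Complex.mul_re, Complex.mul_im,
      map_apply, sum_sub_distrib, sum_add_distrib, mul_sub, mul_add, hxr, hxi, hyr, hyi]
    ring
  have bxr : ∀ u, |xr u| ≤ R := fun u => (Complex.abs_re_le_norm _).trans (hx u)
  have bxi : ∀ u, |xi u| ≤ R := fun u => (Complex.abs_im_le_norm _).trans (hx u)
  have byr : ∀ v, |yr v| ≤ R := fun v => (Complex.abs_re_le_norm _).trans (hy v)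
  have byi : ∀ v, |yi v| ≤ R := fun v => (Complex.abs_im_le_norm _).trans (hy v)
  refine (Complex.norm_le_abs_re_add_abs_im _).trans ?_
  have abs_four_le : ∀ {a b c e K : ℝ}, |a| ≤ K → |b| ≤ K → |c| ≤ K → |e| ≤ K →
      |a + b + c - e| ≤ 4 * K ∧ |a - b - c - e| ≤ 4 * K := by grind
  have abs_re := (abs_four_le (hre.abs_dotProduct_mulVec_le hR bxr byr)
    (him.abs_dotProduct_mulVec_le hR bxr byi) (hre.abs_dotProduct_mulVec_le hR bxi byi)
    (him.abs_dotProduct_mulVec_le hR bxi byr)).2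
  have abs_im := (abs_four_le (hre.abs_dotProduct_mulVec_le hR bxr byi)
    (him.abs_dotProduct_mulVec_le hR bxr byr) (hre.abs_dotProduct_mulVec_le hR bxi byr)
    (him.abs_dotProduct_mulVec_le hR bxi byi)).1
  rw [form_re, form_im]
  linarith

end InfOneLE

theorem uniformProb_not_infOneLE_le {Ω : Type*} [Fintype Ω]
    {W : Ω → Matrix U V ℝ} {t B M : ℝ} (ht : 0 ≤ t)
    (hmgf : ∀ x y, (∀ u, |x u| ≤ 1) → (∀ v, |y v| ≤ 1) →
      𝔼 ω, Real.exp (t * (x ⬝ᵥ W ω *ᵥ y)) ≤ M) :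
    uniformProb (fun ω => ¬ InfOneLE (W ω) B) ≤
      3 ^ (Fintype.card U + Fintype.card V) * (Real.exp (-(t * B)) * M) := by
  have abs_sign_le : ∀ a : SignType, |(a : ℝ)| ≤ 1 := by rintro (_ | _ | _) <;> simp
  have hfail : ∀ ω, ¬ InfOneLE (W ω) B → ∃ xy : (U → SignType) × (V → SignType),
      B < (fun u => (xy.1 u : ℝ)) ⬝ᵥ W ω *ᵥ (fun v => (xy.2 v : ℝ)) := by
    intro ω hω
    simpa [InfOneLE] using hω
  refine (uniformProb_mono hfail).trans ((uniformProb_exists_le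
    (b := Real.exp (-(t * B)) * M) fun xy => ?_).trans_eq ?_)
  · refine (uniformProb_lt_le_exp_mul_expect _ B ht).trans ?_
    exact mul_le_mul_of_nonneg_left (hmgf _ _ (fun u => abs_sign_le _) fun v => abs_sign_le _)
      (Real.exp_pos _).le
  · have : Fintype.card SignType = 3 := rfl
    simp [Fintype.card_prod, this, pow_add]

end InfOneNorm

section LocalSparsity

open Finset Matrix

theorem sum_mul_mul_le_of_forall_subset_sparse {V : Type*} {A : Matrix V V ℝ}
    (hA : ∀ u v, 0 ≤ A u v) (hsymm : A.IsSymm) {κ r : ℝ} (hr : 0 < r) (f : V → ℝ) (S : Finset V)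
    (hS : ∀ T ⊆ S, ∑ u ∈ T, ∑ v ∈ T, A u v ≤ κ * #T) :
    ∑ u ∈ S, ∑ v ∈ S, A u v * (f u * f v) ≤
      κ * r⁻¹ * ∑ u ∈ S, f u ^ 2 + r * ∑ u ∈ S, (∑ v ∈ S, A u v) * f u ^ 2 := by
  have young : ∀ a b : ℝ, 2 * (a * b) ≤ r⁻¹ * a ^ 2 + r * b ^ 2 := fun a b => by
    have := mul_nonneg (inv_nonneg.2 hr.le) (sq_nonneg (a - r * b))
    field_simp at this ⊢
    linarith
  induction S using Finset.strongInduction with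
  | H S ih =>
    rcases S.eq_empty_or_nonempty with rfl | hne
    · simp
    obtain ⟨v, hv, hvκ⟩ : ∃ v ∈ S, ∑ x ∈ S, A v x ≤ κ :=
      exists_le_of_sum_le hne (by simpa [mul_comm] using hS S subset_rfl)
    have hih := ih (S.erase v) (erase_ssubset hv) fun T hT => hS T (hT.trans (erase_subset _ _))
    obtain ⟨S', hvS', rfl⟩ : ∃ S', v ∉ S' ∧ S = insert v S' :=
      ⟨S.erase v, notMem_erase v S, (insert_erase hv).symm⟩
    rw [erase_insert hvS'] at hih
    simp only [sum_insert hvS', sum_add_distrib, add_mul] at hvκ ⊢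
    simp only [fun x => hsymm.apply v x]
    have edges_at_v : 2 * ∑ x ∈ S', A v x * (f v * f x) ≤
        r⁻¹ * ((∑ x ∈ S', A v x) * f v ^ 2) + r * ∑ x ∈ S', A v x * f x ^ 2 := by
      simp only [sum_mul, mul_sum, ← sum_add_distrib]
      exact sum_le_sum fun x _ => by
        nlinarith [mul_le_mul_of_nonneg_left (young (f v) (f x)) (hA v x)]
    have degree_at_v : r⁻¹ * ((A v v + ∑ x ∈ S', A v x) * f v ^ 2) ≤ κ * r⁻¹ * f v ^ 2 := by
      nlinarith [mul_le_mul_of_nonneg_right hvκ (by positivity : 0 ≤ r⁻¹ * f v ^ 2)]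
    have loop_at_v : 2 * (A v v * (f v * f v)) ≤
        r⁻¹ * (A v v * f v ^ 2) + r * (A v v * f v ^ 2) := by
      nlinarith [mul_le_mul_of_nonneg_left (young (f v) (f v)) (hA v v)]
    have loop_nonneg : 0 ≤ A v v * (f v * f v) := mul_nonneg (hA v v) (mul_self_nonneg _)
    have rest_nonneg : 0 ≤ r * ((∑ x ∈ S', A v x) * f v ^ 2) := by
      have := sum_nonneg fun x (_ : x ∈ S') => hA v x
      positivity
    have symm_sum : ∑ x ∈ S', A v x * (f x * f v) = ∑ x ∈ S', A v x * (f v * f x) :=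
      sum_congr rfl fun x _ => by rw [mul_comm (f x)]
    rw [symm_sum]
    linarith

variable {V : Type*} [Fintype V]

/-- A weighted graph `A` is `(τ, κ)`-locally sparse if every set of at most `τ |V|` vertices
induces a subgraph of average degree at most `κ`. -/
def LocallySparse (A : Matrix V V ℝ) (τ κ : ℝ) : Prop :=
  ∀ S : Finset V, (#S : ℝ) ≤ τ * Fintype.card V → ∑ u ∈ S, ∑ v ∈ S, A u v ≤ κ * #S

variable {A : Matrix V V ℝ} {d : ℝ}

theorem sum_mul_sq_le_of_rowSum_le (hA : ∀ u v, 0 ≤ A u v) (hdeg : ∀ u, ∑ v, A u v ≤ d)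
    (f : V → ℝ) (S T : Finset V) :
    ∑ u ∈ S, (∑ v ∈ T, A u v) * f u ^ 2 ≤ d * ∑ u, f u ^ 2 := by
  have hd : ∀ u, 0 ≤ d * f u ^ 2 := fun u =>
    mul_nonneg ((sum_nonneg fun v _ => hA u v).trans (hdeg u)) (sq_nonneg _)
  rw [mul_sum]
  refine (sum_le_sum fun u _ => ?_).trans
    (sum_le_sum_of_subset_of_nonneg (subset_univ S) fun u _ _ => hd u)
  refine mul_le_mul_of_nonneg_right (le_trans ?_ (hdeg u)) (sq_nonneg _)
  exact sum_le_sum_of_subset_of_nonneg (subset_univ T) fun v _ _ => hA u v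

theorem mul_card_heavy_le (hA : ∀ u v, 0 ≤ A u v) (hdeg : ∀ u, ∑ v, A u v ≤ d) (κ : ℝ)
    (T : Finset V) : κ * #{v | κ < ∑ u ∈ T, A u v} ≤ d * #T := by
  set T' : Finset V := {v | κ < ∑ u ∈ T, A u v}
  calc κ * #T' = ∑ _v ∈ T', κ := by rw [sum_const, nsmul_eq_mul, mul_comm]
    _ ≤ ∑ v ∈ T', ∑ u ∈ T, A u v := sum_le_sum fun v hv => (mem_filter.1 hv).2.le
    _ = ∑ u ∈ T, ∑ v ∈ T', A u v := sum_comm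
    _ ≤ ∑ _u ∈ T, d := sum_le_sum fun u _ => le_trans
        (sum_le_sum_of_subset_of_nonneg (subset_univ T') fun v _ _ => hA u v) (hdeg u)
    _ = d * #T := by rw [sum_const, nsmul_eq_mul, mul_comm]

theorem sum_mul_mul_le_of_light (hA : ∀ u v, 0 ≤ A u v) (hdeg : ∀ u, ∑ v, A u v ≤ d) {θ : ℝ}
    (hθ : 0 < θ) (f : V → ℝ) {T Z : Finset V} (hd : 0 ≤ d)
    (hlight : ∀ v ∈ Z, ∑ u ∈ T, A u v ≤ θ ^ 2 * d) :
    ∑ u ∈ T, ∑ v ∈ Z, A u v * (f u * f v) ≤ θ * d * ∑ u, f u ^ 2 := by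
  have young : ∀ a b : ℝ, a * b ≤ θ / 2 * a ^ 2 + θ⁻¹ / 2 * b ^ 2 := fun a b => by
    have := mul_nonneg (inv_nonneg.2 hθ.le) (sq_nonneg (θ * a - b))
    field_simp at this ⊢
    linarith
  have light_side : ∑ v ∈ Z, (∑ u ∈ T, A u v) * f v ^ 2 ≤ θ ^ 2 * d * ∑ v, f v ^ 2 := by
    rw [mul_sum]
    exact (sum_le_sum fun v hv => mul_le_mul_of_nonneg_right (hlight v hv) (sq_nonneg _)).trans
      (sum_le_sum_of_subset_of_nonneg (subset_univ Z) fun v _ _ => by positivity)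
  calc ∑ u ∈ T, ∑ v ∈ Z, A u v * (f u * f v)
      ≤ ∑ u ∈ T, ∑ v ∈ Z, (θ / 2 * (A u v * f u ^ 2) + θ⁻¹ / 2 * (A u v * f v ^ 2)) :=
        sum_le_sum fun u _ => sum_le_sum fun v _ => by
          nlinarith [mul_le_mul_of_nonneg_left (young (f u) (f v)) (hA u v)]
    _ = θ / 2 * ∑ u ∈ T, (∑ v ∈ Z, A u v) * f u ^ 2 +
          θ⁻¹ / 2 * ∑ v ∈ Z, (∑ u ∈ T, A u v) * f v ^ 2 := by
        simp only [sum_add_distrib, ← mul_sum, sum_mul]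
        rw [sum_comm (f := fun u v => A u v * f v ^ 2)]
    _ ≤ θ / 2 * (d * ∑ u, f u ^ 2) + θ⁻¹ / 2 * (θ ^ 2 * d * ∑ v, f v ^ 2) := by
        gcongr
        exact sum_mul_sq_le_of_rowSum_le hA hdeg f T Z
    _ = θ * d * ∑ u, f u ^ 2 := by field_simp; ring

namespace LocallySparse

variable {θ τ : ℝ}

theorem sum_mul_mul_le_of_card_le (hsp : LocallySparse A τ (θ ^ 2 * d)) (hA : ∀ u v, 0 ≤ A u v)
    (hsymm : A.IsSymm) (hdeg : ∀ u, ∑ v, A u v ≤ d) (hd : 0 ≤ d) (hθ : 0 < θ) (f : V → ℝ)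
    {S : Finset V} (hS : #S ≤ τ * Fintype.card V) :
    ∑ u ∈ S, ∑ v ∈ S, A u v * (f u * f v) ≤ 2 * θ * d * ∑ u, f u ^ 2 := by
  refine (sum_mul_mul_le_of_forall_subset_sparse hA hsymm hθ f S fun T hT =>
    hsp T (le_trans (by exact_mod_cast card_le_card hT) hS)).trans ?_
  have sum_le : ∑ u ∈ S, f u ^ 2 ≤ ∑ u, f u ^ 2 :=
    sum_le_sum_of_subset_of_nonneg (subset_univ S) fun u _ _ => sq_nonneg _
  calc _ ≤ θ ^ 2 * d * θ⁻¹ * ∑ u, f u ^ 2 + θ * (d * ∑ u, f u ^ 2) := by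
        gcongr
        exact sum_mul_sq_le_of_rowSum_le hA hdeg f S S
    _ = _ := by field_simp; ring

theorem sum_sum_mul_le_three_mul (hsp : LocallySparse A τ (θ ^ 2 * d)) (hA : ∀ u v, 0 ≤ A u v)
    (hsymm : A.IsSymm) (hdeg : ∀ u, ∑ v, A u v ≤ d) (hd : 0 < d) (hθ : 0 < θ) (hθ1 : θ ≤ 1)
    {f : V → ℝ} (hf : ∀ v, 0 ≤ f v) {T : Finset V} (hT : #T ≤ τ * θ ^ 2 / 2 * Fintype.card V) :
    ∑ u ∈ T, ∑ v, A u v * (f u * f v) ≤ 3 * θ * d * ∑ u, f u ^ 2 := by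
  set T' : Finset V := {v | θ ^ 2 * d < ∑ u ∈ T, A u v}
  have card_T' : θ ^ 2 * (#T' : ℝ) ≤ #T :=
    le_of_mul_le_mul_left (by linarith [mul_card_heavy_le hA hdeg (θ ^ 2 * d) T]) hd
  have card_union : (#(T ∪ T') : ℝ) ≤ τ * Fintype.card V := by
    have hcard : (#(T ∪ T') : ℝ) ≤ #T + #T' := by exact_mod_cast card_union_le T T'
    have hθ2 : θ ^ 2 ≤ 1 := pow_le_one₀ hθ.le hθ1
    refine le_of_mul_le_mul_left ?_ (pow_pos hθ 2)
    nlinarith [(Nat.cast_nonneg #T : (0 : ℝ) ≤ #T)]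
  have light : ∀ v ∈ (T ∪ T')ᶜ, ∑ u ∈ T, A u v ≤ θ ^ 2 * d := fun v hv => by
    by_contra! hheavy
    exact mem_compl.1 hv (mem_union_right T (mem_filter.2 ⟨mem_univ v, hheavy⟩))
  calc ∑ u ∈ T, ∑ v, A u v * (f u * f v)
      = ∑ u ∈ T, ∑ v ∈ T ∪ T', A u v * (f u * f v) +
          ∑ u ∈ T, ∑ v ∈ (T ∪ T')ᶜ, A u v * (f u * f v) := by
        simp only [← sum_add_distrib, sum_add_sum_compl]
    _ ≤ ∑ u ∈ T ∪ T', ∑ v ∈ T ∪ T', A u v * (f u * f v) + θ * d * ∑ u, f u ^ 2 :=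
        add_le_add (sum_le_sum_of_subset_of_nonneg subset_union_left fun u _ _ =>
            sum_nonneg fun v _ => mul_nonneg (hA u v) (mul_nonneg (hf u) (hf v)))
          (sum_mul_mul_le_of_light hA hdeg hθ f hd.le light)
    _ ≤ 3 * θ * d * ∑ u, f u ^ 2 := by
        linarith [hsp.sum_mul_mul_le_of_card_le hA hsymm hdeg hd.le hθ f card_union]

end LocallySparse

end LocalSparsity

section Truncation

open Finset Matrix

variable {V E : Type*} [Fintype V] [NormedAddCommGroup E]

/-- The coordinates of `f` that exceed the quadratic mean of `f` by a factor more than `c ^ (-1/2)`;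
there are at most `c |V|` of them. -/
def largeCoords (f : V → E) (c : ℝ) : Finset V :=
  {v | ∑ u, ‖f u‖ ^ 2 < c * Fintype.card V * ‖f v‖ ^ 2}

/-- The vector `f` with its large coordinates replaced by zero. -/
def truncation (f : V → E) (c : ℝ) : V → E := (largeCoords f c).piecewise 0 f

variable {c : ℝ}

theorem card_largeCoords_le (hc : 0 ≤ c) (f : V → E) :
    #(largeCoords f c) ≤ c * Fintype.card V := by
  set Q := ∑ u, ‖f u‖ ^ 2
  rcases (largeCoords f c).eq_empty_or_nonempty with hempty | ⟨v₀, hv₀⟩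
  · rw [hempty, card_empty, Nat.cast_zero]
    positivity
  have hQ : 0 < Q := by
    have hlarge := (mem_filter.1 hv₀).2
    refine (sum_nonneg fun u _ => sq_nonneg ‖f u‖).lt_of_ne fun hzero => ?_
    have := (sum_eq_zero_iff_of_nonneg fun u _ => sq_nonneg ‖f u‖).1 hzero.symm v₀ (mem_univ v₀)
    rw [← hzero, this, mul_zero] at hlarge
    exact hlarge.false
  refine le_of_mul_le_mul_right ?_ hQ
  calc #(largeCoords f c) * Q = ∑ _v ∈ largeCoords f c, Q := by rw [sum_const, nsmul_eq_mul]
    _ ≤ ∑ v ∈ largeCoords f c, c * Fintype.card V * ‖f v‖ ^ 2 :=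
        sum_le_sum fun v hv => (mem_filter.1 hv).2.le
    _ ≤ c * Fintype.card V * Q := by
        rw [← mul_sum]
        exact mul_le_mul_of_nonneg_left (sum_le_sum_of_subset_of_nonneg (subset_univ _)
          fun v _ _ => sq_nonneg _) (by positivity)

theorem norm_truncation_le_norm (f : V → E) (v : V) : ‖truncation f c v‖ ≤ ‖f v‖ := by
  unfold truncation
  by_cases hv : v ∈ largeCoords f c <;> simp [hv]

theorem norm_truncation_le (hc : 0 < c) (f : V → E) (v : V) :
    ‖truncation f c v‖ ≤ √((∑ u, ‖f u‖ ^ 2) / (c * Fintype.card V)) := by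
  have hn : 0 < Fintype.card V := Fintype.card_pos_iff.2 ⟨v⟩
  refine Real.le_sqrt_of_sq_le ((le_div_iff₀ (by positivity)).2 ?_)
  by_cases hv : v ∈ largeCoords f c
  · rw [truncation, piecewise_eq_of_mem _ _ _ hv, Pi.zero_apply, norm_zero]
    simpa using sum_nonneg fun u _ => sq_nonneg ‖f u‖
  · rw [truncation, piecewise_eq_of_notMem _ _ _ hv, mul_comm]
    simpa [largeCoords] using hv

variable {𝕜 : Type*} [RCLike 𝕜] {A : Matrix V V ℝ} {W : Matrix V V 𝕜} {d θ τ : ℝ}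

theorem norm_form_sub_form_le (hA : ∀ u v, 0 ≤ A u v) (hsymm : A.IsSymm)
    (hW : ∀ u v, ‖W u v‖ ≤ A u v) {f g : V → 𝕜} {T : Finset V} (hgT : ∀ v ∈ T, g v = 0)
    (hgf : ∀ v ∉ T, g v = f v) :
    ‖f ⬝ᵥ W *ᵥ star f - g ⬝ᵥ W *ᵥ star g‖ ≤ 2 * ∑ u ∈ T, ∑ v, A u v * (‖f u‖ * ‖f v‖) := by
  set a : V → V → ℝ := fun u v => A u v * (‖f u‖ * ‖f v‖)
  have ha : ∀ u v, 0 ≤ a u v := fun u v => mul_nonneg (hA u v) (by positivity)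
  have entry_le : ∀ u v, ‖f u * (W u v * star (f v)) - g u * (W u v * star (g v))‖ ≤
      (if u ∈ T then a u v else 0) + (if v ∈ T then a u v else 0) := by
    intro u v
    have hfull : ‖f u * (W u v * star (f v))‖ ≤ a u v := by
      rw [norm_mul, norm_mul, norm_star, mul_left_comm]
      exact mul_le_mul_of_nonneg_right (hW u v) (by positivity)
    split_ifs with hu hv hv
    · simpa [hgT u hu] using hfull.trans (le_add_of_nonneg_left (ha u v))
    · simpa [hgT u hu] using hfull
    · simpa [hgT v hv] using hfull
    · simp [hgf u hu, hgf v hv]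
  have swap_sum : ∑ u, ∑ v ∈ T, a u v = ∑ u ∈ T, ∑ v, a u v := by
    rw [sum_comm]
    exact sum_congr rfl fun v _ => sum_congr rfl fun u _ => by
      simp only [a, hsymm.apply u v, mul_comm ‖f u‖]
  simp only [dotProduct, mulVec, mul_sum, ← sum_sub_distrib, Pi.star_apply]
  refine (norm_sum_le_of_le _ fun u _ => norm_sum_le_of_le _ fun v _ => entry_le u v).trans_eq ?_
  have restrict : ∀ u, (∑ v, if u ∈ T then a u v else 0) = if u ∈ T then ∑ v, a u v else 0 :=
    fun u => by split_ifs <;> simp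
  simp only [sum_add_distrib, restrict, sum_ite_mem, univ_inter, swap_sum, ← two_mul, ← mul_sum]
  rfl

theorem LocallySparse.norm_form_le (hsp : LocallySparse A τ (θ ^ 2 * d))
    (hA : ∀ u v, 0 ≤ A u v) (hsymm : A.IsSymm) (hdeg : ∀ u, ∑ v, A u v ≤ d) (hd : 0 < d)
    (hθ : 0 < θ) (hθ1 : θ ≤ 1) (hτ : 0 ≤ τ) (hW : ∀ u v, ‖W u v‖ ≤ A u v) (f : V → 𝕜) :
    ‖f ⬝ᵥ W *ᵥ star f‖ ≤
      ‖truncation f (τ * θ ^ 2 / 2) ⬝ᵥ W *ᵥ star (truncation f (τ * θ ^ 2 / 2))‖ +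
        6 * θ * d * ∑ v, ‖f v‖ ^ 2 := by
  have removed := hsp.sum_sum_mul_le_three_mul hA hsymm hdeg hd hθ hθ1 (f := fun v => ‖f v‖)
    (fun v => norm_nonneg _) (card_largeCoords_le (by positivity) f)
  have error := norm_form_sub_form_le hA hsymm hW
    (f := f) (g := truncation f (τ * θ ^ 2 / 2)) (T := largeCoords f (τ * θ ^ 2 / 2))
    (fun v hv => piecewise_eq_of_mem _ _ _ hv) (fun v hv => piecewise_eq_of_notMem _ _ _ hv)
  rw [norm_sub_rev] at error
  have := norm_le_norm_add_norm_sub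
    (truncation f (τ * θ ^ 2 / 2) ⬝ᵥ W *ᵥ star (truncation f (τ * θ ^ 2 / 2))) (f ⬝ᵥ W *ᵥ star f)
  linarith

end Truncation

section Lifts

open Finset Matrix

/-- The signing determined by arbitrary labels `ω (u, v)` on the pairs `u < v`: the reversed pair
carries the inverse label, and labels of other pairs are discarded. -/
def signingOf {V Γ : Type*} [LinearOrder V] [Group Γ] (ω : V × V → Γ) (u v : V) : Γ :=
  if u < v then ω (u, v) else if v < u then (ω (v, u))⁻¹ else 1

theorem signingOf_swap {V Γ : Type*} [LinearOrder V] [Group Γ] (ω : V × V → Γ) (u v : V) :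
    signingOf ω v u = (signingOf ω u v)⁻¹ := by
  rcases lt_trichotomy u v with h | rfl | h
  · simp [signingOf, h, h.not_gt]
  · simp [signingOf]
  · simp [signingOf, h, h.not_gt]

variable {V : Type*} {G : SimpleGraph V} {ℓ : ℕ} {s : V → V → Equiv.Perm (Fin ℓ)}

theorem liftGraph_adj (hs : ∀ u v, s v u = (s u v)⁻¹) (p q : V × Fin ℓ) :
    (liftGraph G s).Adj p q ↔ G.Adj p.1 q.1 ∧ q.2 = s p.1 q.1 p.2 := by
  rw [liftGraph, SimpleGraph.fromRel_adj]
  constructor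
  · rintro ⟨-, hpq | ⟨hadj, heq⟩⟩
    · exact hpq
    · exact ⟨hadj.symm, by simp [heq, hs q.1 p.1]⟩
  · intro h
    exact ⟨fun hpq => h.1.ne (congrArg Prod.fst hpq), Or.inl h⟩

variable [Fintype V]

theorem isRegularOfDegree_liftGraph {d : ℕ} (hG : G.IsRegularOfDegree d)
    (hs : ∀ u v, s v u = (s u v)⁻¹) : (liftGraph G s).IsRegularOfDegree d := by
  intro p
  rw [← hG p.1, ← SimpleGraph.card_neighborSet_eq_degree, ← SimpleGraph.card_neighborSet_eq_degree]
  refine Fintype.card_congr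
    { toFun := fun q => ⟨q.1.1, ((liftGraph_adj hs p q.1).1 q.2).1⟩
      invFun := fun v => ⟨(v.1, s p.1 v.1 p.2), (liftGraph_adj hs p _).2 ⟨v.2, rfl⟩⟩
      left_inv := fun q => Subtype.ext (Prod.ext rfl ((liftGraph_adj hs p q.1).1 q.2).2.symm)
      right_inv := fun v => rfl }

theorem dotProduct_adjMatrix_liftGraph_mulVec (hs : ∀ u v, s v u = (s u v)⁻¹)
    (f : V × Fin ℓ → ℝ) :
    f ⬝ᵥ (liftGraph G s).adjMatrix ℝ *ᵥ f =
      ∑ u, ∑ v, G.adjMatrix ℝ u v * ∑ i, f (u, i) * f (v, s u v i) := by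
  simp only [dotProduct, mulVec, SimpleGraph.adjMatrix_apply, liftGraph_adj hs, mul_sum,
    Fintype.sum_prod_type]
  refine sum_congr rfl fun u _ => sum_comm.trans ?_
  refine sum_congr rfl fun v _ => sum_congr rfl fun i _ => ?_
  by_cases huv : G.Adj u v <;> simp [huv]

end Lifts

section HalfLifts

open Finset Matrix
open scoped BigOperators

variable {U : Type*} [LinearOrder U] {m : ℕ}

/-- The part of the adjacency matrix of the lift of the complete graph on `U` with signing
`signingOf ω` that records the edges going up in the order of `U`. -/
def halfLift (ω : U × U → Equiv.Perm (Fin m)) : Matrix (U × Fin m) (U × Fin m) ℝ :=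
  of fun p q => if p.1 < q.1 ∧ ω (p.1, q.1) p.2 = q.2 then 1 else 0

variable (U m) in
/-- The expectation of `halfLift ω` for uniformly random `ω`. -/
def halfLiftMean : Matrix (U × Fin m) (U × Fin m) ℝ :=
  of fun p q => if p.1 < q.1 then (m : ℝ)⁻¹ else 0

variable [Fintype U]

theorem dotProduct_halfLift_mulVec (ω : U × U → Equiv.Perm (Fin m)) (x y : U × Fin m → ℝ) :
    x ⬝ᵥ halfLift ω *ᵥ y =
      ∑ e : U × U, if e.1 < e.2 then ∑ i, x (e.1, i) * y (e.2, ω e i) else 0 := by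
  simp only [dotProduct, mulVec, halfLift, of_apply, Fintype.sum_prod_type, mul_sum]
  refine sum_congr rfl fun a _ => sum_comm.trans (sum_congr rfl fun b _ => ?_)
  by_cases hab : a < b <;> simp [hab]

theorem dotProduct_halfLiftMean_mulVec (x y : U × Fin m → ℝ) :
    x ⬝ᵥ halfLiftMean U m *ᵥ y =
      ∑ e : U × U, if e.1 < e.2 then (∑ i, x (e.1, i)) * 𝔼 i, y (e.2, i) else 0 := by
  simp only [dotProduct, mulVec, halfLiftMean, of_apply, Fintype.sum_prod_type, mul_sum]
  refine sum_congr rfl fun a _ => sum_comm.trans (sum_congr rfl fun b _ => ?_)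
  by_cases hab : a < b
  · simp only [hab, if_true, Fintype.expect_eq_sum_div_card, Fintype.card_fin, div_eq_inv_mul]
    rw [mul_sum, sum_mul_sum]
  · simp [hab]

theorem expect_exp_mul_halfLift_sub_mean_le (t : ℝ) {x y : U × Fin m → ℝ} (hx : ∀ p, |x p| ≤ 1)
    (hy : ∀ q, |y q| ≤ 1) :
    𝔼 ω : U × U → Equiv.Perm (Fin m),
        Real.exp (t * (x ⬝ᵥ (halfLift ω - halfLiftMean U m) *ᵥ y)) ≤
      Real.exp (#{e : U × U | e.1 < e.2} * (8 * t ^ 2 * m)) := by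
  set g : U × U → Equiv.Perm (Fin m) → ℝ := fun e π => Real.exp (if e.1 < e.2 then
    t * ∑ i, x (e.1, i) * y (e.2, π i) - t * ((∑ i, x (e.1, i)) * 𝔼 i, y (e.2, i)) else 0)
  have product_form : ∀ ω : U × U → Equiv.Perm (Fin m),
      Real.exp (t * (x ⬝ᵥ (halfLift ω - halfLiftMean U m) *ᵥ y)) = ∏ e, g e (ω e) := by
    intro ω
    rw [sub_mulVec, dotProduct_sub, dotProduct_halfLift_mulVec, dotProduct_halfLiftMean_mulVec,
      ← sum_sub_distrib, mul_sum, Real.exp_sum]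
    refine prod_congr rfl fun e _ => ?_
    by_cases he : e.1 < e.2 <;> simp [g, he, mul_sub]
  have factor_le : ∀ e, 𝔼 π, g e π ≤ Real.exp (if e.1 < e.2 then 8 * t ^ 2 * m else 0) := by
    intro e
    by_cases he : e.1 < e.2
    · simp only [g, he, if_true, Real.exp_sub, ← expect_div]
      exact (div_le_iff₀ (Real.exp_pos _)).2 ((expect_perm_exp_sum_mul_le t (fun i => hx (e.1, i))
        (fun i => hy (e.2, i))).trans_eq (by rw [add_comm, Real.exp_add]))
    · simp [g, he]
  simp only [product_form, expect_pi_prod]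
  refine (prod_le_prod (fun e _ => expect_nonneg fun π _ => (Real.exp_pos _).le)
    fun e _ => factor_le e).trans_eq ?_
  rw [← Real.exp_sum, ← sum_filter, sum_const, nsmul_eq_mul]

theorem uniformProb_forall_mem_halfLift_eq_one_le (F : Finset ((U × Fin m) × (U × Fin m))) :
    uniformProb (fun ω : U × U → Equiv.Perm (Fin m) => ∀ f ∈ F, halfLift ω f.1 f.2 = 1) ≤
      (Real.exp 1 / m) ^ #F := by
  set prescribed : U × U → Finset (Fin m × Fin m) :=
    fun e => {ij | ((e.1, ij.1), (e.2, ij.2)) ∈ F}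
  have card_prescribed : ∑ e, #(prescribed e) = #F := by
    calc ∑ e, #(prescribed e)
        = ∑ e : U × U, ∑ ij : Fin m × Fin m, if ((e.1, ij.1), (e.2, ij.2)) ∈ F then 1 else 0 := by
          simp only [prescribed, card_filter]
      _ = ∑ f, if f ∈ F then 1 else 0 := by
          rw [← Fintype.sum_prod_type']
          exact Equiv.sum_comp (Equiv.prodProdProdComm U U (Fin m) (Fin m)) fun f =>
            if f ∈ F then 1 else 0
      _ = #F := by rw [← card_filter, filter_univ_mem]
  have hfactor : ∀ ω : U × U → Equiv.Perm (Fin m), (∀ f ∈ F, halfLift ω f.1 f.2 = 1) →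
      ∀ e, ∀ p ∈ prescribed e, ω e p.1 = p.2 := by
    intro ω hω e p hp
    have := hω _ (mem_filter.1 hp).2
    by_contra hne
    rw [halfLift, of_apply, if_neg fun h => hne h.2] at this
    exact zero_ne_one this
  calc _ ≤ uniformProb fun ω : U × U → Equiv.Perm (Fin m) =>
          ∀ e, ∀ p ∈ prescribed e, ω e p.1 = p.2 := uniformProb_mono hfactor
    _ = ∏ e, uniformProb fun π : Equiv.Perm (Fin m) => ∀ p ∈ prescribed e, π p.1 = p.2 :=
        uniformProb_pi_forall fun e (π : Equiv.Perm (Fin m)) => ∀ p ∈ prescribed e, π p.1 = p.2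
    _ ≤ ∏ e, (Real.exp 1 / m) ^ #(prescribed e) := by
        refine prod_le_prod (fun e _ => expect_nonneg fun π _ => by positivity) fun e _ => ?_
        simpa using uniformProb_perm_extending_le (prescribed e)
    _ = _ := by rw [prod_pow_eq_pow_sum, card_prescribed]

theorem uniformProb_lt_sum_halfLift_le (S : Finset (U × Fin m)) (r : ℝ) :
    uniformProb (fun ω : U × U → Equiv.Perm (Fin m) => r < ∑ p ∈ S, ∑ q ∈ S, halfLift ω p q) ≤
      ((#S ^ 2).choose ⌈r⌉₊ : ℝ) * (Real.exp 1 / m) ^ ⌈r⌉₊ := by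
  have hmany : ∀ ω : U × U → Equiv.Perm (Fin m), r < ∑ p ∈ S, ∑ q ∈ S, halfLift ω p q →
      ∃ F ∈ (S ×ˢ S).powersetCard ⌈r⌉₊, ∀ f ∈ F, halfLift ω f.1 f.2 = 1 := by
    intro ω hω
    set E := {f ∈ S ×ˢ S | halfLift ω f.1 f.2 = 1}
    have hE : ∑ p ∈ S, ∑ q ∈ S, halfLift ω p q = #E := by
      rw [card_filter, Nat.cast_sum]
      refine (sum_product' S S fun p q => halfLift ω p q).symm.trans ?_
      refine sum_congr rfl fun f _ => ?_
      by_cases hf : f.1.1 < f.2.1 ∧ ω (f.1.1, f.2.1) f.1.2 = f.2.2 <;> simp [halfLift, hf]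
    obtain ⟨F, hFE, hF⟩ := exists_subset_card_eq (Nat.ceil_le.2 (hE ▸ hω.le) : ⌈r⌉₊ ≤ #E)
    exact ⟨F, mem_powersetCard.2 ⟨hFE.trans (filter_subset _ _), hF⟩,
      fun f hf => (mem_filter.1 (hFE hf)).2⟩
  calc _ ≤ ∑ F ∈ (S ×ˢ S).powersetCard ⌈r⌉₊,
          uniformProb fun ω : U × U → Equiv.Perm (Fin m) => ∀ f ∈ F, halfLift ω f.1 f.2 = 1 :=
        (uniformProb_mono hmany).trans (uniformProb_exists_mem_le _ _)
    _ ≤ ∑ _F ∈ (S ×ˢ S).powersetCard ⌈r⌉₊, (Real.exp 1 / m) ^ ⌈r⌉₊ :=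
        sum_le_sum fun F hF => by
          rw [← (mem_powersetCard.1 hF).2]
          exact uniformProb_forall_mem_halfLift_eq_one_le F
    _ = _ := by rw [sum_const, card_powersetCard, card_product, ← sq, nsmul_eq_mul]

theorem uniformProb_exists_card_eq_lt_sum_halfLift_le (k : ℕ) (r : ℝ) :
    uniformProb (fun ω : U × U → Equiv.Perm (Fin m) =>
        ∃ S ∈ powersetCard k univ, r < ∑ p ∈ S, ∑ q ∈ S, halfLift ω p q) ≤
      ((Fintype.card U * m).choose k : ℝ) *
        (((k ^ 2).choose ⌈r⌉₊ : ℝ) * (Real.exp 1 / m) ^ ⌈r⌉₊) := by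
  have hcard : ((Fintype.card U * m).choose k : ℝ) =
      #(powersetCard k (univ : Finset (U × Fin m))) := by simp
  rw [hcard, ← nsmul_eq_mul]
  refine (uniformProb_exists_mem_le _ _).trans (sum_le_card_nsmul _ _ _ fun S hS => ?_)
  rw [← (mem_powersetCard.1 hS).2]
  exact uniformProb_lt_sum_halfLift_le S r

end HalfLifts

section RandomBaseGraph

open Finset Matrix
open scoped BigOperators

theorem choose_le_three_mul_div_pow (N : ℕ) {j : ℕ} (hj : 0 < j) :
    (N.choose j : ℝ) ≤ (3 * N / j) ^ j := by
  have pow_self_le : (j : ℝ) ^ j ≤ 3 ^ j * j.factorial := by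
    have := Real.pow_div_factorial_le_exp (j : ℝ) (by positivity) j
    rw [div_le_iff₀ (by positivity), ← mul_one (j : ℝ), Real.exp_nat_mul, mul_one] at this
    refine this.trans ?_
    gcongr
    exact Real.exp_one_lt_three.le
  refine (Nat.choose_le_pow_div j N).trans ?_
  rw [div_pow, mul_pow, div_le_div_iff₀ (by positivity) (by positivity), mul_comm (3 ^ j),
    mul_assoc]
  gcongr

theorem choose_mul_pow_le_quarter_pow {N k : ℕ} {C : ℝ} (hk : 0 < k) (hC : 1 ≤ C)
    (hkN : 4 * C ^ 2 * k ≤ N) :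
    (N.choose k : ℝ) * (C * k / N) ^ (3 * k) ≤ (1 / 4) ^ k := by
  have hN : (0 : ℝ) < N := lt_of_lt_of_le (by positivity) hkN
  have hratio : (k : ℝ) / N ≤ 1 / (4 * C ^ 2) := by
    rw [div_le_div_iff₀ hN (by positivity)]
    linarith
  calc (N.choose k : ℝ) * (C * k / N) ^ (3 * k)
      ≤ (3 * N / k) ^ k * (C * k / N) ^ (3 * k) := by
        gcongr
        exact choose_le_three_mul_div_pow N hk
    _ = (3 * C ^ 3 * (k / N) ^ 2) ^ k := by
        rw [pow_mul, ← mul_pow]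
        congr 1
        field_simp
    _ ≤ (3 * C ^ 3 * (1 / (4 * C ^ 2)) ^ 2) ^ k := by gcongr
    _ = (3 / (16 * C)) ^ k := by
        congr 1
        field_simp
        norm_num
    _ ≤ (1 / 4) ^ k := by
        gcongr ?_ ^ k
        rw [div_le_div_iff₀ (by positivity) (by norm_num)]
        linarith

theorem choose_sq_mul_pow_le {k q : ℕ} {C D m : ℝ} (hq : 0 < q) (hD : 0 < D) (hm : 0 ≤ m)
    (hC : 9 * k * D ≤ C * q) :
    ((k ^ 2).choose q : ℝ) * (Real.exp 1 / m) ^ q ≤ (C * k / (D * m)) ^ q := by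
  calc ((k ^ 2).choose q : ℝ) * (Real.exp 1 / m) ^ q
      ≤ (3 * (k ^ 2 : ℕ) / q) ^ q * (3 / m) ^ q := by
        gcongr
        · exact choose_le_three_mul_div_pow _ hq
        · exact Real.exp_one_lt_three.le
    _ = (9 * k * D / (q * D) * k / m) ^ q := by
        rw [← mul_pow]
        push_cast
        congr 1
        field_simp
        ring
    _ ≤ (C * q / (q * D) * k / m) ^ q := by gcongr
    _ = (C * k / (D * m)) ^ q := by
        congr 1
        field_simp

/-- The relative size `τ` of the vertex sets on which the random base graph is sparse. It is
`1 / (4 C²)` for the constant `C = 36 / θ²` that appears in the union bound over these sets. -/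
def sparseScale (θ : ℝ) : ℝ := θ ^ 4 / 5184

/-- The proportion `c` of coordinates that are truncated in a graph sparse at `sparseScale θ`. -/
def truncationLevel (θ : ℝ) : ℝ := sparseScale θ * θ ^ 2 / 2

variable {d m : ℕ} {θ : ℝ}

theorem choose_mul_choose_mul_pow_le (hθ : 0 < θ) (hθ1 : θ ≤ 1) (hd : 6 ≤ θ ^ 2 * d) {k : ℕ}
    (hk : 0 < k) (hkn : k ≤ sparseScale θ * ((d + 1) * m : ℕ)) :
    (((d + 1) * m).choose k : ℝ) *
        (((k ^ 2).choose ⌈θ ^ 2 * d / 2 * k⌉₊ : ℝ) * (Real.exp 1 / m) ^ ⌈θ ^ 2 * d / 2 * k⌉₊) ≤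
      (1 / 4) ^ k := by
  set q := ⌈θ ^ 2 * d / 2 * k⌉₊
  set C := 36 / θ ^ 2 with hCdef
  have hk0 : (1 : ℝ) ≤ k := by exact_mod_cast hk
  have hθ2 : θ ^ 2 ≤ 1 := pow_le_one₀ hθ.le hθ1
  have hC : 36 ≤ C := by
    rw [le_div_iff₀ (by positivity)]
    linarith
  have hd1 : (1 : ℝ) ≤ d := by nlinarith [Nat.cast_nonneg (α := ℝ) d]
  have hqk : θ ^ 2 * d / 2 * k ≤ q := Nat.le_ceil _
  have h3kq : 3 * k ≤ q := by
    have : (3 * k : ℝ) ≤ q := by nlinarith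
    exact_mod_cast this
  have hCq : 9 * k * ((d : ℝ) + 1) ≤ C * q := by
    calc 9 * k * ((d : ℝ) + 1) ≤ C * (θ ^ 2 * d / 2 * k) := by
          rw [hCdef]
          field_simp
          nlinarith
      _ ≤ C * q := by gcongr
  have hkN : 4 * C ^ 2 * k ≤ ((d + 1) * m : ℕ) := by
    rw [sparseScale, div_mul_eq_mul_div, le_div_iff₀ (by norm_num)] at hkn
    rw [hCdef]
    field_simp
    linarith
  have hr1 : C * k / ((d + 1) * m : ℕ) ≤ 1 := div_le_one_of_le₀ (by nlinarith) (by positivity)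
  refine le_trans ?_ (choose_mul_pow_le_quarter_pow hk (by linarith) hkN)
  gcongr
  refine (choose_sq_mul_pow_le (by omega) (by positivity) (by positivity) hCq).trans ?_
  push_cast at hr1 ⊢
  exact pow_le_pow_of_le_one (by positivity) hr1 h3kq

theorem uniformProb_not_locallySparse_halfLift_le (hθ : 0 < θ) (hθ1 : θ ≤ 1)
    (hd : 6 ≤ θ ^ 2 * d) :
    uniformProb (fun ω : Fin (d + 1) × Fin (d + 1) → Equiv.Perm (Fin m) =>
      ¬ LocallySparse (halfLift ω) (sparseScale θ) (θ ^ 2 * d / 2)) ≤ 1 / 3 := by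
  set n := (d + 1) * m
  set sizes : Finset ℕ := {k ∈ Ico 1 (n + 1) | (k : ℝ) ≤ sparseScale θ * n}
  have hfail : ∀ ω : Fin (d + 1) × Fin (d + 1) → Equiv.Perm (Fin m),
      ¬ LocallySparse (halfLift ω) (sparseScale θ) (θ ^ 2 * d / 2) →
      ∃ k ∈ sizes, ∃ S ∈ powersetCard k univ,
        θ ^ 2 * d / 2 * k < ∑ p ∈ S, ∑ q ∈ S, halfLift ω p q := by
    intro ω hω
    simp only [LocallySparse, not_forall, not_le] at hω
    obtain ⟨S, hS, hdense⟩ := hω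
    have hcard : Fintype.card (Fin (d + 1) × Fin m) = n := by simp [n]
    have hSpos : 0 < #S := by
      refine card_pos.2 (nonempty_iff_ne_empty.2 ?_)
      rintro rfl
      simp at hdense
    exact ⟨#S, mem_filter.2 ⟨mem_Ico.2 ⟨hSpos, Nat.lt_succ_of_le (hcard ▸ card_le_univ S)⟩,
      hcard ▸ hS⟩, S, mem_powersetCard.2 ⟨subset_univ S, rfl⟩, hdense⟩
  refine (uniformProb_mono hfail).trans ((uniformProb_exists_mem_le _ _).trans ?_)
  calc _ ≤ ∑ k ∈ sizes, (1 / 4 : ℝ) ^ k := by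
        refine sum_le_sum fun k hk => ?_
        obtain ⟨hk, hkn⟩ := mem_filter.1 hk
        refine le_trans ?_ (choose_mul_choose_mul_pow_le hθ hθ1 hd (mem_Ico.1 hk).1 hkn)
        simpa [n] using uniformProb_exists_card_eq_lt_sum_halfLift_le (U := Fin (d + 1)) (m := m) k
          (θ ^ 2 * d / 2 * k)
    _ ≤ ∑ k ∈ Ico 1 (n + 1), (1 / 4 : ℝ) ^ k :=
        sum_le_sum_of_subset_of_nonneg (filter_subset _ _) fun k _ _ => by positivity
    _ ≤ (1 / 4) ^ 1 / (1 - 1 / 4) := geom_sum_Ico_le_of_lt_one (by norm_num) (by norm_num)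
    _ = 1 / 3 := by norm_num

theorem card_pairs_lt_le (d : ℕ) :
    #{e : Fin (d + 1) × Fin (d + 1) | e.1 < e.2} ≤ d * (d + 1) := by
  calc #{e : Fin (d + 1) × Fin (d + 1) | e.1 < e.2} ≤ #(univ : Finset (Fin (d + 1))).offDiag :=
        card_le_card fun e he => by simpa using (mem_filter.1 he).2.ne
    _ = d * (d + 1) := by simp [offDiag_card, ← Nat.sub_one_mul]

theorem uniformProb_not_infOneLE_halfLift_sub_mean_le {η : ℝ} (hη : 0 ≤ η)
    (hd : 384 ≤ η ^ 2 * d) (hm : 0 < m) :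
    uniformProb (fun ω : Fin (d + 1) × Fin (d + 1) → Equiv.Perm (Fin m) =>
      ¬ InfOneLE (halfLift ω - halfLiftMean (Fin (d + 1)) m) (η * d * ((d + 1) * m : ℕ) / 2)) ≤
        1 / 2 := by
  set n := (d + 1) * m with hn
  have hcard : Fintype.card (Fin (d + 1) × Fin m) = n := by simp [n]
  have exponent : (#{e : Fin (d + 1) × Fin (d + 1) | e.1 < e.2} : ℝ) * (8 * (η / 32) ^ 2 * m) ≤
      η ^ 2 * d * n / 128 := by
    calc _ ≤ (d * (d + 1) : ℕ) * (8 * (η / 32) ^ 2 * (m : ℝ)) := by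
          gcongr
          exact card_pairs_lt_le d
      _ = η ^ 2 * d * n / 128 := by
          rw [hn]
          push_cast
          ring
  have hn1 : n ≠ 0 := by positivity
  have base_le : (9 : ℝ) * Real.exp (-3) ≤ 1 / 2 := by
    have : (18 : ℝ) ≤ Real.exp 3 := by
      rw [show (3 : ℝ) = (3 : ℕ) * 1 by norm_num, Real.exp_nat_mul]
      exact le_trans (by norm_num) (pow_le_pow_left₀ (by norm_num) Real.exp_one_gt_d9.le 3)
    rw [Real.exp_neg, ← div_eq_mul_inv, div_le_div_iff₀ (Real.exp_pos _) (by norm_num)]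
    linarith
  calc _ ≤ 3 ^ (n + n) * (Real.exp (-(η / 32 * (η * d * n / 2))) *
          Real.exp (η ^ 2 * d * n / 128)) := by
        have := uniformProb_not_infOneLE_le (B := η * d * n / 2) (by positivity : 0 ≤ η / 32)
          fun x y hx hy => (expect_exp_mul_halfLift_sub_mean_le (U := Fin (d + 1)) (m := m)
            (η / 32) hx hy).trans (Real.exp_le_exp.2 exponent)
        rwa [hcard] at this
    _ ≤ 3 ^ (n + n) * Real.exp (n * (-3)) := by
        rw [← Real.exp_add]
        gcongr
        nlinarith [Nat.cast_nonneg (α := ℝ) n]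
    _ = (9 * Real.exp (-3)) ^ n := by
        rw [Real.exp_nat_mul, ← two_mul, pow_mul, mul_pow]
        norm_num
    _ ≤ (1 / 2) ^ n := by gcongr
    _ ≤ 1 / 2 := pow_le_of_le_one (by norm_num) (by norm_num) hn1

end RandomBaseGraph

section BaseGraph

open Finset Matrix
open scoped BigOperators

variable {θ : ℝ}

theorem truncationLevel_pos (hθ : 0 < θ) : 0 < truncationLevel θ := by
  unfold truncationLevel sparseScale
  positivity

theorem two_mul_truncationLevel_le (hθ : 0 < θ) (hθ1 : θ ≤ 1) : 2 * truncationLevel θ ≤ θ := by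
  have : θ ^ 6 ≤ θ := pow_le_of_le_one hθ.le hθ1 (by norm_num)
  unfold truncationLevel sparseScale
  linarith

theorem six_le_sq_mul_of_le_sq_mul (hθ : 0 < θ) (hθ1 : θ ≤ 1) {d : ℕ}
    (hd : 384 ≤ (θ * truncationLevel θ) ^ 2 * d) : 6 ≤ θ ^ 2 * d := by
  have hc1 : truncationLevel θ ^ 2 ≤ 1 :=
    pow_le_one₀ (truncationLevel_pos hθ).le (by linarith [two_mul_truncationLevel_le hθ hθ1])
  have : truncationLevel θ ^ 2 * (θ ^ 2 * d) ≤ 1 * (θ ^ 2 * d) := by gcongr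
  linarith

theorem LocallySparse.add_transpose {V : Type*} [Fintype V] {A : Matrix V V ℝ} {τ κ : ℝ}
    (hA : LocallySparse A τ (κ / 2)) : LocallySparse (A + Aᵀ) τ κ := by
  intro S hS
  have swap : ∑ u ∈ S, ∑ v ∈ S, A v u = ∑ u ∈ S, ∑ v ∈ S, A u v := sum_comm
  simp only [Matrix.add_apply, transpose_apply, sum_add_distrib, swap]
  linarith [hA S hS]

theorem LocallySparse.submatrix_equiv {V V' : Type*} [Fintype V] [Fintype V'] {A : Matrix V V ℝ}
    {τ κ : ℝ} (hA : LocallySparse A τ κ) (e : V' ≃ V) : LocallySparse (A.submatrix e e) τ κ := by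
  intro S hS
  simpa using hA (S.map e.toEmbedding) (by rwa [card_map, ← Fintype.card_congr e])

theorem SndEigLE.submatrix_equiv {V V' : Type*} [Fintype V] [Fintype V'] {A : Matrix V V ℝ}
    {b : ℝ} (hA : SndEigLE A b) (e : V' ≃ V) : SndEigLE (A.submatrix e e) b := by
  intro f hf
  have := hA (f ∘ e.symm) ((Equiv.sum_comp e.symm f).trans hf)
  rw [submatrix_mulVec_equiv, ← comp_equiv_symm_dotProduct]
  exact this.trans_eq (congrArg (b * ·) (Equiv.sum_comp e.symm fun v => f v ^ 2))

section AdjMatrix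

variable {V : Type*}

theorem adjMatrix_nonneg (G : SimpleGraph V) (u v : V) : 0 ≤ G.adjMatrix ℝ u v := by
  rw [SimpleGraph.adjMatrix_apply]
  split_ifs <;> norm_num

theorem sum_adjMatrix_of_isRegularOfDegree [Fintype V] {G : SimpleGraph V} {d : ℕ}
    (hG : G.IsRegularOfDegree d) (u : V) : ∑ v, G.adjMatrix ℝ u v = d := by
  simpa [mulVec, dotProduct] using
    SimpleGraph.adjMatrix_mulVec_const_apply_of_regular (a := (1 : ℝ)) hG (v := u)

theorem norm_form_le_of_locallySparse_adjMatrix {𝕜 : Type*} [RCLike 𝕜] [Fintype V]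
    {G : SimpleGraph V} {d : ℕ} (hG : G.IsRegularOfDegree d)
    (hsparse : LocallySparse (G.adjMatrix ℝ) (sparseScale θ) (θ ^ 2 * d)) (hd : 0 < (d : ℝ))
    (hθ : 0 < θ) (hθ1 : θ ≤ 1) {W : Matrix V V 𝕜} (hW : ∀ u v, ‖W u v‖ ≤ G.adjMatrix ℝ u v)
    (f : V → 𝕜) :
    ‖f ⬝ᵥ W *ᵥ star f‖ ≤
      ‖truncation f (truncationLevel θ) ⬝ᵥ W *ᵥ star (truncation f (truncationLevel θ))‖ +
        6 * θ * d * ∑ v, ‖f v‖ ^ 2 :=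
  hsparse.norm_form_le (adjMatrix_nonneg G) (SimpleGraph.isSymm_adjMatrix G (α := ℝ))
    (fun u => (sum_adjMatrix_of_isRegularOfDegree hG u).le) hd hθ hθ1
    (by unfold sparseScale; positivity) hW f

end AdjMatrix

section MeanZero

variable {V : Type*} [Fintype V] {c : ℝ}

theorem sq_sum_truncation_le (hc : 0 ≤ c) {f : V → ℝ} (hf : ∑ v, f v = 0) :
    (∑ v, truncation f c v) ^ 2 ≤ c * Fintype.card V * ∑ v, f v ^ 2 := by
  have hsum : ∑ v, truncation f c v = -∑ v ∈ largeCoords f c, f v := by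
    rw [truncation, sum_piecewise, ← compl_eq_univ_sdiff]
    simp only [Pi.zero_apply, sum_const_zero, zero_add]
    linarith [sum_add_sum_compl (largeCoords f c) f]
  rw [hsum, neg_sq]
  refine sq_sum_le_card_mul_sum_sq.trans ?_
  gcongr
  · exact card_largeCoords_le hc f
  · exact subset_univ _

end MeanZero

section CompleteGraph

variable {U : Type*} [LinearOrder U] {m : ℕ}

theorem adjMatrix_liftGraph_top (ω : U × U → Equiv.Perm (Fin m)) :
    (liftGraph ⊤ (signingOf ω)).adjMatrix ℝ = halfLift ω + (halfLift ω)ᵀ := by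
  ext p q
  rw [SimpleGraph.adjMatrix_apply, Matrix.add_apply, transpose_apply]
  simp only [liftGraph_adj (signingOf_swap ω), SimpleGraph.top_adj, halfLift, of_apply, signingOf]
  rcases lt_trichotomy p.1 q.1 with h | h | h
  · simp [h, h.not_gt, h.ne, eq_comm]
  · simp [h]
  · simp [h, h.not_gt, h.ne', Equiv.eq_symm_apply]

variable [Fintype U]

theorem two_mul_sum_lt_mul (x : U → ℝ) :
    2 * ∑ e : U × U, (if e.1 < e.2 then x e.1 * x e.2 else 0) =
      (∑ a, x a) ^ 2 - ∑ a, x a ^ 2 := by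
  have split : ∀ a b, x a * x b = (if a < b then x a * x b else 0) +
      (if b < a then x b * x a else 0) + if a = b then x a ^ 2 else 0 := by
    intro a b
    rcases lt_trichotomy a b with h | rfl | h
    · simp [h, h.not_gt, h.ne]
    · simp [sq]
    · simp [h, h.not_gt, h.ne', mul_comm]
  have swap : ∑ a, ∑ b, (if b < a then x b * x a else 0) =
      ∑ a, ∑ b, if a < b then x a * x b else 0 := sum_comm
  rw [sq, sum_mul_sum, Fintype.sum_prod_type,
    sum_congr rfl fun a _ => sum_congr rfl fun b _ => split a b]
  simp only [sum_add_distrib, swap, sum_ite_eq, mem_univ, if_true]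
  ring

theorem abs_two_mul_halfLiftMean_form_le (x : U × Fin m → ℝ) :
    |2 * (x ⬝ᵥ halfLiftMean U m *ᵥ x)| ≤ (∑ p, x p) ^ 2 / m + ∑ p, x p ^ 2 := by
  have form_eq : 2 * (x ⬝ᵥ halfLiftMean U m *ᵥ x) =
      (∑ p, x p) ^ 2 / m - (∑ a, (∑ i, x (a, i)) ^ 2) / m := by
    rw [dotProduct_halfLiftMean_mulVec, ← sub_div, Fintype.sum_prod_type (f := x),
      ← two_mul_sum_lt_mul, mul_div_assoc, sum_div]
    refine congrArg (2 * ·) (sum_congr rfl fun e _ => ?_)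
    split_ifs <;> simp [Fintype.expect_eq_sum_div_card, mul_div_assoc]
  have fiber_le : (∑ a, (∑ i, x (a, i)) ^ 2) / m ≤ ∑ p, x p ^ 2 := by
    refine div_le_of_le_mul₀ (by positivity) (by positivity) ?_
    rw [Fintype.sum_prod_type, sum_mul]
    refine sum_le_sum fun a _ => ?_
    simpa [mul_comm] using sq_sum_le_card_mul_sum_sq (s := univ) (f := fun i => x (a, i))
  rw [form_eq]
  refine (abs_sub _ _).trans ?_
  rw [abs_of_nonneg (by positivity), abs_of_nonneg (by positivity)]
  gcongr

end CompleteGraph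

variable {d m : ℕ}

theorem isRegularOfDegree_liftGraph_top (ω : Fin (d + 1) × Fin (d + 1) → Equiv.Perm (Fin m)) :
    (liftGraph ⊤ (signingOf ω)).IsRegularOfDegree d := by
  refine isRegularOfDegree_liftGraph (fun a => ?_) (signingOf_swap ω)
  convert SimpleGraph.IsRegularOfDegree.top (V := Fin (d + 1)) a
  simp

theorem abs_adjMatrix_liftGraph_top_truncation_le (hθ : 0 < θ) (hm : 0 < m)
    {ω : Fin (d + 1) × Fin (d + 1) → Equiv.Perm (Fin m)}
    (hdisc : InfOneLE (halfLift ω - halfLiftMean (Fin (d + 1)) m)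
      (θ * truncationLevel θ * d * ((d + 1) * m : ℕ) / 2))
    {f : Fin (d + 1) × Fin m → ℝ} (hf : ∑ p, f p = 0) :
    |truncation f (truncationLevel θ) ⬝ᵥ (liftGraph ⊤ (signingOf ω)).adjMatrix ℝ *ᵥ
        truncation f (truncationLevel θ)| ≤
      (θ * d + truncationLevel θ * (d + 1) + 1) * ∑ p, f p ^ 2 := by
  set c := truncationLevel θ
  set g := truncation f c
  set Q := ∑ p, f p ^ 2 with hQ
  have hc : 0 < c := truncationLevel_pos hθ
  have hm0 : (0 : ℝ) < m := by exact_mod_cast hm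
  have form_eq : g ⬝ᵥ (liftGraph ⊤ (signingOf ω)).adjMatrix ℝ *ᵥ g =
      2 * (g ⬝ᵥ (halfLift ω - halfLiftMean (Fin (d + 1)) m) *ᵥ g) +
        2 * (g ⬝ᵥ halfLiftMean (Fin (d + 1)) m *ᵥ g) := by
    have transpose_form : g ⬝ᵥ (halfLift ω)ᵀ *ᵥ g = g ⬝ᵥ halfLift ω *ᵥ g := by
      rw [mulVec_transpose, dotProduct_comm, dotProduct_mulVec]
    rw [adjMatrix_liftGraph_top, add_mulVec, dotProduct_add, transpose_form, sub_mulVec,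
      dotProduct_sub]
    ring
  have fluctuation := hdisc.abs_dotProduct_mulVec_le (Real.sqrt_nonneg _)
    (norm_truncation_le hc f) (norm_truncation_le hc f)
  have mean := abs_two_mul_halfLiftMean_form_le g
  have sum_le : (∑ p, g p) ^ 2 / m ≤ c * (d + 1) * Q := by
    rw [div_le_iff₀ hm0]
    refine (sq_sum_truncation_le hc.le hf).trans_eq ?_
    simp
    ring
  have energy_le : ∑ p, g p ^ 2 ≤ Q := sum_le_sum fun p _ => by
    simpa using pow_le_pow_left₀ (norm_nonneg _) (norm_truncation_le_norm (c := c) f p) 2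
  have radius : θ * c * d * ((d + 1) * m : ℕ) / 2 *
      √((∑ p, ‖f p‖ ^ 2) / (c * Fintype.card (Fin (d + 1) × Fin m))) ^ 2 = θ * d * Q / 2 := by
    rw [Real.sq_sqrt (by positivity)]
    simp [hQ]
    field_simp
  rw [radius] at fluctuation
  rw [form_eq]
  refine (abs_add_le _ _).trans ?_
  rw [abs_mul, abs_two]
  linarith

theorem sndEigLE_liftGraph_top (hθ : 0 < θ) (hθ1 : θ ≤ 1) (hd : 6 ≤ θ ^ 2 * d) (hm : 0 < m)
    {ω : Fin (d + 1) × Fin (d + 1) → Equiv.Perm (Fin m)}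
    (hsparse : LocallySparse ((liftGraph ⊤ (signingOf ω)).adjMatrix ℝ) (sparseScale θ) (θ ^ 2 * d))
    (hdisc : InfOneLE (halfLift ω - halfLiftMean (Fin (d + 1)) m)
      (θ * truncationLevel θ * d * ((d + 1) * m : ℕ) / 2)) :
    SndEigLE ((liftGraph ⊤ (signingOf ω)).adjMatrix ℝ) (9 * θ * d) := by
  intro f hf
  have hθd : 6 ≤ θ * d := hd.trans (by gcongr; exact pow_le_of_le_one hθ.le hθ1 two_ne_zero)
  have hd1 : (1 : ℝ) ≤ d := by nlinarith
  have reduction := norm_form_le_of_locallySparse_adjMatrix (isRegularOfDegree_liftGraph_top ω)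
    hsparse (by linarith) hθ hθ1 (fun p q => (Real.norm_of_nonneg (adjMatrix_nonneg _ p q)).le) f
  simp only [star_trivial, Real.norm_eq_abs, sq_abs] at reduction
  have bounded := abs_adjMatrix_liftGraph_top_truncation_le hθ hm hdisc hf
  have mean_le : truncationLevel θ * (d + 1) + 1 ≤ 2 * θ * d := by
    nlinarith [two_mul_truncationLevel_le hθ hθ1, truncationLevel_pos hθ]
  have : 0 ≤ ∑ p, f p ^ 2 := sum_nonneg fun p _ => sq_nonneg _
  nlinarith

theorem exists_locallySparse_sndEigLE_graph (hθ : 0 < θ) (hθ1 : θ ≤ 1)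
    (hd : 384 ≤ (θ * truncationLevel θ) ^ 2 * d) (hm : 0 < m) :
    ∃ G : SimpleGraph (Fin ((d + 1) * m)), G.IsRegularOfDegree d ∧
      LocallySparse (G.adjMatrix ℝ) (sparseScale θ) (θ ^ 2 * d) ∧
      SndEigLE (G.adjMatrix ℝ) (9 * θ * d) := by
  have hd6 := six_le_sq_mul_of_le_sq_mul hθ hθ1 hd
  have hη : 0 ≤ θ * truncationLevel θ := mul_nonneg hθ.le (truncationLevel_pos hθ).le
  have failure := (uniformProb_or_le _ _).trans
    (add_le_add (uniformProb_not_locallySparse_halfLift_le (m := m) hθ hθ1 hd6)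
      (uniformProb_not_infOneLE_halfLift_sub_mean_le hη hd hm))
  obtain ⟨ω, hω⟩ := exists_not_of_uniformProb_lt_one (failure.trans_lt (by norm_num))
  rw [not_or, not_not, not_not] at hω
  set L := liftGraph ⊤ (signingOf ω)
  have hsparse : LocallySparse (L.adjMatrix ℝ) (sparseScale θ) (θ ^ 2 * d) :=
    adjMatrix_liftGraph_top ω ▸ hω.1.add_transpose
  let e : Fin ((d + 1) * m) ≃ Fin (d + 1) × Fin m := finProdFinEquiv.symm
  have hcomap : (L.comap e).adjMatrix ℝ = (L.adjMatrix ℝ).submatrix e e := by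
    ext u v
    simp only [SimpleGraph.adjMatrix_apply, submatrix_apply, SimpleGraph.comap_adj]
  refine ⟨L.comap e, fun u => ?_, ?_, ?_⟩
  · rw [← (SimpleGraph.Iso.comap e L).degree_eq]
    exact isRegularOfDegree_liftGraph_top ω _
  · exact hcomap.symm ▸ hsparse.submatrix_equiv e
  · exact hcomap.symm ▸ (sndEigLE_liftGraph_top hθ hθ1 hd6 hm hsparse hω.2).submatrix_equiv e

end BaseGraph

section RandomSigning

open Finset Matrix
open scoped BigOperators

variable {V : Type*} {d : ℕ}

/-- The adjacency matrix of `G` with the entry `1` of each edge `(u, v)` replaced by the weight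
`z u v`; weights `χ (s u v)` with `χ` a character give the Fourier component at `χ` of the lift of
`G` by the signing `s`. -/
def twistedAdjMatrix {R : Type*} [Zero R] (G : SimpleGraph V) (z : V → V → R) : Matrix V V R :=
  of fun u v => if G.Adj u v then z u v else 0

theorem norm_twistedAdjMatrix_le {E : Type*} [SeminormedAddGroup E] (G : SimpleGraph V)
    {z : V → V → E} (hz : ∀ u v, ‖z u v‖ ≤ 1) (u v : V) :
    ‖twistedAdjMatrix G z u v‖ ≤ G.adjMatrix ℝ u v := by
  rw [twistedAdjMatrix, of_apply, SimpleGraph.adjMatrix_apply]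
  split_ifs
  exacts [hz u v, norm_zero.le]

theorem map_twistedAdjMatrix {R S : Type*} [Zero R] [Zero S] (G : SimpleGraph V) (z : V → V → R)
    {φ : R → S} (hφ : φ 0 = 0) :
    (twistedAdjMatrix G z).map φ = twistedAdjMatrix G fun u v => φ (z u v) := by
  ext u v
  simp only [twistedAdjMatrix, map_apply, of_apply, apply_ite φ, hφ]

variable [Fintype V] {G : SimpleGraph V}

section Concentration

variable [LinearOrder V] {Γ : Type*} [Group Γ] {ρ : Γ → ℝ} {σ : ℝ}

theorem dotProduct_twistedAdjMatrix_signingOf_mulVec (hρ : ∀ h, ρ h⁻¹ = σ * ρ h) (x y : V → ℝ)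
    (ω : V × V → Γ) :
    x ⬝ᵥ twistedAdjMatrix G (fun u v => ρ (signingOf ω u v)) *ᵥ y =
      ∑ e : V × V, (if e.1 < e.2 ∧ G.Adj e.1 e.2 then x e.1 * y e.2 + σ * (x e.2 * y e.1) else 0) *
        ρ (ω e) := by
  have split : ∀ u v, x u * (twistedAdjMatrix G (fun u v => ρ (signingOf ω u v)) u v * y v) =
      (if u < v ∧ G.Adj u v then x u * y v * ρ (ω (u, v)) else 0) +
        if v < u ∧ G.Adj v u then σ * (x u * y v) * ρ (ω (v, u)) else 0 := by
    intro u v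
    rw [twistedAdjMatrix, of_apply, signingOf]
    rcases lt_trichotomy u v with h | rfl | h
    · by_cases huv : G.Adj u v <;> simp [h, h.not_gt, huv]
      ring
    · simp
    · by_cases huv : G.Adj v u <;> simp [h, h.not_gt, huv, G.adj_comm u v, hρ]
      ring
  simp only [dotProduct, mulVec, mul_sum, split, sum_add_distrib]
  rw [sum_comm (f := fun u v => if v < u ∧ G.Adj v u then _ else _), ← sum_add_distrib,
    Fintype.sum_prod_type]
  refine sum_congr rfl fun u _ => ?_
  rw [← sum_add_distrib]
  refine sum_congr rfl fun v _ => ?_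
  split_ifs <;> ring

variable [Fintype Γ]

theorem expect_exp_twistedAdjMatrix_signingOf_le (hG : G.IsRegularOfDegree d)
    (hρ : ∀ h, ρ h⁻¹ = σ * ρ h) (hσ : |σ| ≤ 1) (hmean : 𝔼 h, ρ h = 0) (hbound : ∀ h, |ρ h| ≤ 1)
    (t : ℝ) {x y : V → ℝ} (hx : ∀ u, |x u| ≤ 1) (hy : ∀ v, |y v| ≤ 1) :
    𝔼 ω : V × V → Γ, Real.exp
        (t * (x ⬝ᵥ twistedAdjMatrix G (fun u v => ρ (signingOf ω u v)) *ᵥ y)) ≤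
      Real.exp (2 * t ^ 2 * (d * Fintype.card V)) := by
  set κ : V × V → ℝ := fun e =>
    if e.1 < e.2 ∧ G.Adj e.1 e.2 then x e.1 * y e.2 + σ * (x e.2 * y e.1) else 0
  have abs_mul_le : ∀ u v, |x u * y v| ≤ 1 := fun u v => by
    rw [abs_mul]
    exact mul_le_one₀ (hx u) (abs_nonneg _) (hy v)
  have hκ : ∀ e, |κ e| ≤ 2 * G.adjMatrix ℝ e.1 e.2 := by
    intro e
    have := mul_le_one₀ hσ (abs_nonneg _) (abs_mul_le e.2 e.1)
    by_cases hadj : G.Adj e.1 e.2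
    · by_cases hlt : e.1 < e.2
      · simp only [κ, hlt, hadj, and_self, if_true, SimpleGraph.adjMatrix_apply]
        refine (abs_add_le _ _).trans ?_
        rw [abs_mul σ]
        linarith [abs_mul_le e.1 e.2]
      · simp [κ, hlt, hadj]
    · simp [κ, hadj]
  have factor_le : ∀ e, 𝔼 h, Real.exp (t * (κ e * ρ h)) ≤
      Real.exp (2 * t ^ 2 * G.adjMatrix ℝ e.1 e.2) := by
    intro e
    refine (expect_exp_mul_le t (by rw [← mul_expect, hmean, mul_zero]) fun h => ?_).trans_eq
      (?_ : Real.exp (t ^ 2 * (2 * G.adjMatrix ℝ e.1 e.2) ^ 2 / 2) = _)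
    · rw [abs_mul]
      exact (mul_le_of_le_one_right (abs_nonneg _) (hbound h)).trans (hκ e)
    · rw [SimpleGraph.adjMatrix_apply]
      split_ifs <;> ring_nf
  calc _ = 𝔼 ω : V × V → Γ, ∏ e, Real.exp (t * (κ e * ρ (ω e))) := by
        simp only [dotProduct_twistedAdjMatrix_signingOf_mulVec hρ, mul_sum, Real.exp_sum, κ]
    _ = ∏ e, 𝔼 h, Real.exp (t * (κ e * ρ h)) :=
        expect_pi_prod fun (e : V × V) (h : Γ) => Real.exp (t * (κ e * ρ h))
    _ ≤ ∏ e : V × V, Real.exp (2 * t ^ 2 * G.adjMatrix ℝ e.1 e.2) :=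
        prod_le_prod (fun e _ => expect_nonneg fun h _ => (Real.exp_pos _).le)
          fun e _ => factor_le e
    _ = _ := by
        rw [← Real.exp_sum, ← mul_sum, Fintype.sum_prod_type]
        simp only [sum_adjMatrix_of_isRegularOfDegree hG, sum_const, card_univ, nsmul_eq_mul,
          mul_comm]

theorem two_mul_exp_mul_three_pow_mul_exp_lt_one {n : ℕ} (hn : 0 < n) {x : ℝ} (hx : 384 ≤ x) :
    2 * Real.exp n * (3 ^ (n + n) * Real.exp (-(x * n / 8))) < 1 := by
  have hn1 : (1 : ℝ) ≤ n := by exact_mod_cast hn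
  have two_le : (2 : ℝ) ≤ Real.exp 1 := by linarith [Real.add_one_le_exp 1]
  have three_pow_le : (3 : ℝ) ^ (n + n) ≤ Real.exp (4 * n) := by
    have : (3 : ℝ) ≤ Real.exp 2 := by linarith [Real.add_one_le_exp 2]
    calc (3 : ℝ) ^ (n + n) ≤ Real.exp 2 ^ (n + n) := by gcongr
      _ = Real.exp (4 * n) := by rw [← Real.exp_nat_mul]; push_cast; ring_nf
  calc _ ≤ Real.exp 1 * Real.exp n * (Real.exp (4 * n) * Real.exp (-(x * n / 8))) := by gcongr
    _ = Real.exp (1 + n + (4 * n + -(x * n / 8))) := by simp only [Real.exp_add]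
    _ < 1 := Real.exp_lt_one_iff.2 (by nlinarith)

theorem exists_forall_infOneLE_twistedAdjMatrix {ι : Type*} [Fintype ι] [Nonempty V]
    (hG : G.IsRegularOfDegree d) {ρ : ι → Γ → ℝ} {σ : ι → ℝ}
    (hρ : ∀ i h, ρ i h⁻¹ = σ i * ρ i h) (hσ : ∀ i, |σ i| ≤ 1) (hmean : ∀ i, 𝔼 h, ρ i h = 0)
    (hbound : ∀ i h, |ρ i h| ≤ 1) (hι : (Fintype.card ι : ℝ) ≤ 2 * Real.exp (Fintype.card V))
    {η : ℝ} (hη : 0 ≤ η) (hd : 384 ≤ η ^ 2 * d) :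
    ∃ ω : V × V → Γ, ∀ i, InfOneLE (twistedAdjMatrix G fun u v => ρ i (signingOf ω u v))
      (η * d * Fintype.card V) := by
  set n := Fintype.card V
  have failure_one : ∀ i, uniformProb (fun ω : V × V → Γ =>
      ¬ InfOneLE (twistedAdjMatrix G fun u v => ρ i (signingOf ω u v)) (η * d * n)) ≤
        3 ^ (n + n) * Real.exp (-(η ^ 2 * d * n / 8)) := by
    intro i
    refine (uniformProb_not_infOneLE_le (t := η / 4) (by positivity) fun x y hx hy =>
      expect_exp_twistedAdjMatrix_signingOf_le hG (hρ i) (hσ i) (hmean i) (hbound i) _ hx hy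
      ).trans_eq ?_
    rw [← Real.exp_add]
    congr 2
    ring
  have failure : uniformProb (fun ω : V × V → Γ => ∃ i, ¬ InfOneLE
      (twistedAdjMatrix G fun u v => ρ i (signingOf ω u v)) (η * d * n)) < 1 :=
    calc _ ≤ Fintype.card ι * (3 ^ (n + n) * Real.exp (-(η ^ 2 * d * n / 8))) :=
          uniformProb_exists_le failure_one
      _ ≤ 2 * Real.exp n * (3 ^ (n + n) * Real.exp (-(η ^ 2 * d * n / 8))) := by gcongr
      _ < 1 := two_mul_exp_mul_three_pow_mul_exp_lt_one Fintype.card_pos hd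
  obtain ⟨ω, hω⟩ := exists_not_of_uniformProb_lt_one failure
  exact ⟨ω, by simpa using hω⟩

end Concentration

section Characters

theorem exists_forall_character_infOneLE [LinearOrder V] [Nonempty V] {Γ : Type*} [CommGroup Γ]
    [Fintype Γ] (hG : G.IsRegularOfDegree d)
    (hΓ : (Fintype.card Γ : ℝ) ≤ Real.exp (Fintype.card V)) {η : ℝ} (hη : 0 ≤ η)
    (hd : 384 ≤ η ^ 2 * d) :
    ∃ s : V → V → Γ, (∀ u v, s v u = (s u v)⁻¹) ∧ ∀ χ : AddChar (Additive Γ) ℂ, χ ≠ 0 →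
      InfOneLE (twistedAdjMatrix G fun u v => (χ (.ofMul (s u v))).re) (η * d * Fintype.card V) ∧
      InfOneLE (twistedAdjMatrix G fun u v => (χ (.ofMul (s u v))).im)
        (η * d * Fintype.card V) := by
  have sum_eq_zero : ∀ χ : {χ : AddChar (Additive Γ) ℂ // χ ≠ 0},
      ∑ h : Γ, χ.1 (.ofMul h) = 0 := fun χ =>
    (Additive.ofMul.sum_comp χ.1).trans ((AddChar.sum_eq_ite χ.1).trans (if_neg χ.2))
  have hcard : (Fintype.card ({χ : AddChar (Additive Γ) ℂ // χ ≠ 0} ⊕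
      {χ : AddChar (Additive Γ) ℂ // χ ≠ 0}) : ℝ) ≤ 2 * Real.exp (Fintype.card V) := by
    have : Fintype.card {χ : AddChar (Additive Γ) ℂ // χ ≠ 0} ≤ Fintype.card Γ :=
      (Fintype.card_subtype_le _).trans_eq
        (AddChar.card_eq.trans (Fintype.card_congr Additive.toMul))
    rw [Fintype.card_sum, ← two_mul]
    push_cast
    exact mul_le_mul_of_nonneg_left ((Nat.cast_le.2 this).trans hΓ) zero_le_two
  obtain ⟨ω, hω⟩ := exists_forall_infOneLE_twistedAdjMatrix (Γ := Γ) hG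
    (ρ := Sum.elim (fun χ h => (χ.1 (.ofMul h)).re) (fun χ h => (χ.1 (.ofMul h)).im))
    (σ := Sum.elim (fun _ => 1) (fun _ => -1))
    (by rintro (χ | χ) h <;> simp [AddChar.map_neg_eq_conj])
    (by rintro (χ | χ) <;> simp)
    (by rintro (χ | χ) <;> simp [Fintype.expect_eq_sum_div_card, ← Complex.re_sum,
          ← Complex.im_sum, sum_eq_zero])
    (by
      rintro (χ | χ) h
      exacts [(Complex.abs_re_le_norm _).trans_eq (AddChar.norm_apply _ _),
        (Complex.abs_im_le_norm _).trans_eq (AddChar.norm_apply _ _)])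
    hcard hη hd
  exact ⟨signingOf ω, signingOf_swap ω, fun χ hχ => ⟨hω (.inl ⟨χ, hχ⟩), hω (.inr ⟨χ, hχ⟩)⟩⟩

variable {θ : ℝ}

theorem norm_twistedAdjMatrix_form_le (hθ : 0 < θ) (hθ1 : θ ≤ 1) (hG : G.IsRegularOfDegree d)
    (hd : 0 < d) (hsparse : LocallySparse (G.adjMatrix ℝ) (sparseScale θ) (θ ^ 2 * d))
    {z : V → V → ℂ} (hz : ∀ u v, ‖z u v‖ ≤ 1)
    (hre : InfOneLE (twistedAdjMatrix G fun u v => (z u v).re)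
      (θ * truncationLevel θ * d * Fintype.card V))
    (him : InfOneLE (twistedAdjMatrix G fun u v => (z u v).im)
      (θ * truncationLevel θ * d * Fintype.card V)) (g : V → ℂ) :
    ‖g ⬝ᵥ twistedAdjMatrix G z *ᵥ star g‖ ≤ 14 * θ * d * ∑ v, ‖g v‖ ^ 2 := by
  rcases isEmpty_or_nonempty V with hempty | hne
  · simp [dotProduct]
  set c := truncationLevel θ
  have hc : 0 < c := truncationLevel_pos hθ
  have hd0 : (0 : ℝ) < d := by exact_mod_cast hd
  have reduction := norm_form_le_of_locallySparse_adjMatrix hG hsparse hd0 hθ hθ1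
    (norm_twistedAdjMatrix_le G hz) g
  rw [← map_twistedAdjMatrix G z Complex.zero_re] at hre
  rw [← map_twistedAdjMatrix G z Complex.zero_im] at him
  have bounded := InfOneLE.norm_dotProduct_mulVec_le hre him (Real.sqrt_nonneg _)
    (norm_truncation_le hc g) (y := star (truncation g c))
    fun v => (norm_star _).trans_le (norm_truncation_le hc g v)
  have radius : θ * c * d * Fintype.card V * √((∑ v, ‖g v‖ ^ 2) / (c * Fintype.card V)) ^ 2 =
      θ * d * ∑ v, ‖g v‖ ^ 2 := by
    have : (0 : ℝ) < Fintype.card V := by exact_mod_cast Fintype.card_pos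
    rw [Real.sq_sqrt (by positivity)]
    field_simp
  rw [radius] at bounded
  linarith

end Characters

end RandomSigning

section Fourier

open Finset Matrix
open scoped BigOperators ComplexConjugate

variable {A : Type*} [AddCommGroup A] [Fintype A]

/-- The Fourier transform of a real function on a finite abelian group, up to the sign convention
for the character. -/
def groupFourier (F : A → ℝ) (χ : AddChar A ℂ) : ℂ :=
  ∑ a, F a * χ a

theorem groupFourier_zero (F : A → ℝ) : groupFourier F 0 = (∑ a, F a : ℝ) := by
  simp [groupFourier]

theorem sum_apply_mul_groupFourier_mul_conj (F K : A → ℝ) (s : A) :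
    ∑ χ : AddChar A ℂ, χ s * (groupFourier F χ * conj (groupFourier K χ)) =
      Fintype.card A * (∑ a, F a * K (a + s) : ℝ) := by
  have expand : ∀ χ : AddChar A ℂ, χ s * (groupFourier F χ * conj (groupFourier K χ)) =
      ∑ a, ∑ b, (F a * K b : ℂ) * χ (a + s - b) := by
    intro χ
    rw [groupFourier, groupFourier, map_sum, sum_mul_sum, mul_sum]
    refine sum_congr rfl fun a _ => ?_
    rw [mul_sum]
    refine sum_congr rfl fun b _ => ?_
    rw [sub_eq_add_neg, AddChar.map_add_eq_mul, AddChar.map_add_eq_mul, AddChar.map_neg_eq_conj,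
      map_mul, Complex.conj_ofReal]
    ring
  rw [sum_congr rfl fun χ _ => expand χ, sum_comm, Complex.ofReal_sum, mul_sum]
  refine sum_congr rfl fun a _ => ?_
  rw [sum_comm]
  simp only [← mul_sum, AddChar.sum_apply_eq_ite, sub_eq_zero, mul_ite, mul_zero, sum_ite_eq,
    mem_univ, if_true, Complex.ofReal_mul]
  ring

theorem sum_norm_groupFourier_sq (F : A → ℝ) :
    ∑ χ : AddChar A ℂ, ‖groupFourier F χ‖ ^ 2 = Fintype.card A * ∑ a, F a ^ 2 := by
  have h := sum_apply_mul_groupFourier_mul_conj F F 0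
  simp only [AddChar.map_zero_eq_one, one_mul, add_zero, Complex.mul_conj,
    Complex.normSq_eq_norm_sq, ← sq] at h
  exact_mod_cast h

variable {V : Type*} [Fintype V] {G : SimpleGraph V}

theorem sum_twistedAdjMatrix_groupFourier (s : V → V → A) (f : V → A → ℝ) :
    ∑ χ : AddChar A ℂ, (fun u => groupFourier (f u) χ) ⬝ᵥ
        twistedAdjMatrix G (fun u v => χ (s u v)) *ᵥ star (fun u => groupFourier (f u) χ) =
      Fintype.card A *
        (∑ u, ∑ v, G.adjMatrix ℝ u v * ∑ a, f u a * f v (a + s u v) : ℝ) := by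
  simp only [dotProduct, mulVec, Complex.ofReal_sum, mul_sum (s := univ (α := V))]
  rw [sum_comm]
  refine sum_congr rfl fun u _ => ?_
  rw [sum_comm]
  refine sum_congr rfl fun v _ => ?_
  rw [Complex.ofReal_mul, mul_left_comm, ← sum_apply_mul_groupFourier_mul_conj, mul_sum]
  refine sum_congr rfl fun χ _ => ?_
  rw [twistedAdjMatrix, of_apply, SimpleGraph.adjMatrix_apply, Pi.star_apply, RCLike.star_def]
  split_ifs <;> push_cast <;> ring

theorem abs_lift_form_le_of_forall_character {s : V → V → A} {f : V → A → ℝ} {b : ℝ}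
    (hχ : ∀ χ : AddChar A ℂ, ‖(fun u => groupFourier (f u) χ) ⬝ᵥ
        twistedAdjMatrix G (fun u v => χ (s u v)) *ᵥ star (fun u => groupFourier (f u) χ)‖ ≤
      b * ∑ u, ‖groupFourier (f u) χ‖ ^ 2) :
    |∑ u, ∑ v, G.adjMatrix ℝ u v * ∑ a, f u a * f v (a + s u v)| ≤
      b * ∑ u, ∑ a, f u a ^ 2 := by
  have hcard : (0 : ℝ) < Fintype.card A := by exact_mod_cast Fintype.card_pos
  refine le_of_mul_le_mul_left ?_ hcard
  calc Fintype.card A * |∑ u, ∑ v, G.adjMatrix ℝ u v * ∑ a, f u a * f v (a + s u v)|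
      = ‖∑ χ : AddChar A ℂ, (fun u => groupFourier (f u) χ) ⬝ᵥ
        twistedAdjMatrix G (fun u v => χ (s u v)) *ᵥ star (fun u => groupFourier (f u) χ)‖ := by
        rw [sum_twistedAdjMatrix_groupFourier, norm_mul, Complex.norm_natCast, Complex.norm_real,
          Real.norm_eq_abs]
    _ ≤ ∑ χ : AddChar A ℂ, b * ∑ u, ‖groupFourier (f u) χ‖ ^ 2 :=
        (norm_sum_le _ _).trans (sum_le_sum fun χ _ => hχ χ)
    _ = b * ∑ u, Fintype.card A * ∑ a, f u a ^ 2 := by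
        rw [← mul_sum, sum_comm, sum_congr rfl fun u _ => sum_norm_groupFourier_sq (f u)]
    _ = Fintype.card A * (b * ∑ u, ∑ a, f u a ^ 2) := by
        rw [← mul_sum, mul_left_comm]

theorem SndEigLE.norm_trivialCharacter_form_le {b : ℝ} (hG : SndEigLE (G.adjMatrix ℝ) b)
    (s : V → V → A) {f : V → A → ℝ} (hf : ∑ u, ∑ a, f u a = 0) :
    ‖(fun u => groupFourier (f u) 0) ⬝ᵥ
        twistedAdjMatrix G (fun u v => (0 : AddChar A ℂ) (s u v)) *ᵥ
          star (fun u => groupFourier (f u) 0)‖ ≤ b * ∑ u, ‖groupFourier (f u) 0‖ ^ 2 := by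
  have form_eq : (fun u => groupFourier (f u) 0) ⬝ᵥ
      twistedAdjMatrix G (fun u v => (0 : AddChar A ℂ) (s u v)) *ᵥ
        star (fun u => groupFourier (f u) 0) =
      ((fun u => ∑ a, f u a) ⬝ᵥ G.adjMatrix ℝ *ᵥ (fun u => ∑ a, f u a) : ℝ) := by
    simp only [dotProduct, mulVec, Complex.ofReal_sum, Complex.ofReal_mul, Pi.star_apply,
      groupFourier_zero, RCLike.star_def, map_sum, Complex.conj_ofReal, twistedAdjMatrix, of_apply,
      SimpleGraph.adjMatrix_apply, AddChar.zero_apply, apply_ite Complex.ofReal, Complex.ofReal_one,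
      Complex.ofReal_zero]
  rw [form_eq, Complex.norm_real]
  simpa only [groupFourier_zero, Complex.norm_real, Real.norm_eq_abs, sq_abs] using hG _ hf

end Fourier

section AbelianLift

open Finset Matrix

variable {V : Type*} [Fintype V] {G : SimpleGraph V} {d : ℕ} {θ : ℝ}

theorem SndEigLE.mono {A : Matrix V V ℝ} {b b' : ℝ} (hA : SndEigLE A b) (hb : b ≤ b') :
    SndEigLE A b' := fun f hf =>
  (hA f hf).trans (mul_le_mul_of_nonneg_right hb (sum_nonneg fun v _ => sq_nonneg (f v)))

theorem exists_signing_abs_lift_form_le [LinearOrder V] [Nonempty V] {Γ : Type*} [CommGroup Γ]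
    [Fintype Γ] (hθ : 0 < θ) (hθ1 : θ ≤ 1) (hd : 384 ≤ (θ * truncationLevel θ) ^ 2 * d)
    (hG : G.IsRegularOfDegree d)
    (hsparse : LocallySparse (G.adjMatrix ℝ) (sparseScale θ) (θ ^ 2 * d))
    (hspec : SndEigLE (G.adjMatrix ℝ) (14 * θ * d))
    (hΓ : (Fintype.card Γ : ℝ) ≤ Real.exp (Fintype.card V)) :
    ∃ s : V → V → Γ, (∀ u v, s v u = (s u v)⁻¹) ∧
      ∀ f : V → Additive Γ → ℝ, ∑ u, ∑ h, f u h = 0 →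
        |∑ u, ∑ v, G.adjMatrix ℝ u v * ∑ h, f u h * f v (h + .ofMul (s u v))| ≤
          14 * θ * d * ∑ u, ∑ h, f u h ^ 2 := by
  have hd0 : 0 < d := Nat.pos_of_ne_zero fun h => by norm_num [h] at hd
  obtain ⟨s, hinv, hdisc⟩ := exists_forall_character_infOneLE (Γ := Γ) hG hΓ
    (mul_nonneg hθ.le (truncationLevel_pos hθ).le) hd
  refine ⟨s, hinv, fun f hf => abs_lift_form_le_of_forall_character fun χ => ?_⟩
  rcases eq_or_ne χ 0 with rfl | hχ
  · exact hspec.norm_trivialCharacter_form_le _ hf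
  · exact norm_twistedAdjMatrix_form_le hθ hθ1 hG hd0 hsparse
      (fun u v => (AddChar.norm_apply _ _).le) (hdisc χ hχ).1 (hdisc χ hχ).2 _

variable {ℓ : ℕ}

theorem bijective_apply_of_transitive_of_comm {α : Type*} {H : Subgroup (Equiv.Perm α)}
    (htrans : ∀ i j, ∃ h ∈ H, h i = j) (hcomm : ∀ a b : H, a * b = b * a) (i : α) :
    Function.Bijective fun h : H => (h : Equiv.Perm α) i := by
  refine ⟨fun h k hk => Subtype.ext (Equiv.ext fun j => ?_), fun j => ?_⟩
  · obtain ⟨g, hg, rfl⟩ := htrans i j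
    have apply_comm : ∀ a : H, (a : Equiv.Perm α) (g i) = g ((a : Equiv.Perm α) i) := fun a =>
      congrArg (fun b : H => (b : Equiv.Perm α) i) (hcomm a ⟨g, hg⟩)
    rw [apply_comm, apply_comm]
    exact congrArg g hk
  · obtain ⟨g, hg, hgi⟩ := htrans i j
    exact ⟨⟨g, hg⟩, hgi⟩

theorem sndEigLE_adjMatrix_liftGraph_of_regular {Γ : Type*} [CommGroup Γ] [Fintype Γ]
    (φ : Γ →* Equiv.Perm (Fin ℓ)) {i₀ : Fin ℓ} (hφ : Function.Bijective fun h => φ h i₀) {b : ℝ}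
    {s : V → V → Γ} (hs : ∀ u v, s v u = (s u v)⁻¹)
    (hform : ∀ f : V → Additive Γ → ℝ, ∑ u, ∑ h, f u h = 0 →
      |∑ u, ∑ v, G.adjMatrix ℝ u v * ∑ h, f u h * f v (h + .ofMul (s u v))| ≤
        b * ∑ u, ∑ h, f u h ^ 2) :
    SndEigLE ((liftGraph G fun u v => φ (s u v)).adjMatrix ℝ) b := by
  intro f hf
  set e : Additive Γ ≃ Fin ℓ := Additive.toMul.trans (Equiv.ofBijective _ hφ)
  have he : ∀ g h, e (h + .ofMul g) = φ g (e h) := fun g h => by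
    rw [add_comm]
    exact congrArg (· i₀) (φ.map_mul g h.toMul)
  have fiber_sum : ∀ F : V × Fin ℓ → ℝ, ∑ p, F p = ∑ u, ∑ h, F (u, e h) := fun F => by
    rw [Fintype.sum_prod_type]
    exact sum_congr rfl fun u _ => (e.sum_comp fun i => F (u, i)).symm
  have form_eq : f ⬝ᵥ (liftGraph G fun u v => φ (s u v)).adjMatrix ℝ *ᵥ f =
      ∑ u, ∑ v, G.adjMatrix ℝ u v * ∑ h, f (u, e h) * f (v, e (h + .ofMul (s u v))) := by
    rw [dotProduct_adjMatrix_liftGraph_mulVec fun u v => by rw [hs, map_inv]]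
    refine sum_congr rfl fun u _ => sum_congr rfl fun v _ => congrArg _ ?_
    simp only [he]
    exact (e.sum_comp fun i => f (u, i) * f (v, φ (s u v) i)).symm
  rw [form_eq, fiber_sum]
  exact hform (fun u h => f (u, e h)) (fiber_sum f ▸ hf)

end AbelianLift

section Existence

variable {V : Type*} [Fintype V] [LinearOrder V] [Nonempty V] {G : SimpleGraph V} {d ℓ : ℕ} {θ : ℝ}

theorem exists_signing_sndEigLE_liftGraph (hθ : 0 < θ) (hθ1 : θ ≤ 1)
    (hd : 384 ≤ (θ * truncationLevel θ) ^ 2 * d) (hG : G.IsRegularOfDegree d)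
    (hsparse : LocallySparse (G.adjMatrix ℝ) (sparseScale θ) (θ ^ 2 * d))
    (hspec : SndEigLE (G.adjMatrix ℝ) (14 * θ * d)) (hℓ : 0 < ℓ)
    (hℓexp : (ℓ : ℝ) ≤ Real.exp (Fintype.card V)) {H : Subgroup (Equiv.Perm (Fin ℓ))}
    (htrans : ∀ i j : Fin ℓ, ∃ h ∈ H, h i = j) (hcomm : ∀ a b : H, a * b = b * a) :
    ∃ s : V → V → H, (∀ u v, s v u = (s u v)⁻¹) ∧
      SndEigLE ((liftGraph G fun u v => (s u v : Equiv.Perm (Fin ℓ))).adjMatrix ℝ)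
        (14 * θ * d) := by
  let _ : CommGroup H := { (inferInstance : Group H) with mul_comm := hcomm }
  have hregular := bijective_apply_of_transitive_of_comm htrans hcomm ⟨0, hℓ⟩
  have hcard : Fintype.card H = ℓ :=
    (Fintype.card_of_bijective hregular).trans (Fintype.card_fin ℓ)
  obtain ⟨s, hinv, hform⟩ := exists_signing_abs_lift_form_le (Γ := H) hθ hθ1 hd hG hsparse hspec
    (hcard.symm ▸ hℓexp)
  exact ⟨s, hinv, sndEigLE_adjMatrix_liftGraph_of_regular H.subtype hregular hinv hform⟩

end Existence

theorem exists_succ_mul_between {d n : ℕ} (hn : d + 1 ≤ n) :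
    ∃ m, 0 < m ∧ n ≤ (d + 1) * m ∧ (d + 1) * m ≤ 2 * n := by
  refine ⟨n / (d + 1) + 1, Nat.succ_pos _, (Nat.lt_mul_div_succ n d.succ_pos).le, ?_⟩
  rw [mul_add, mul_one, two_mul]
  exact add_le_add (Nat.mul_div_le n (d + 1)) hn

theorem stmt1_general (ε : ℝ) (hε : 0 < ε) :
    ∃ d₀ : ℕ, ∀ d : ℕ, d₀ ≤ d → ∀ n : ℕ, d + 1 ≤ n →
      ∀ ℓ : ℕ, 0 < ℓ → (ℓ : ℝ) ≤ Real.exp n →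
        ∀ H : Subgroup (Equiv.Perm (Fin ℓ)),
          (∀ i j : Fin ℓ, ∃ h ∈ H, h i = j) →
          (∀ a b : H, a * b = b * a) →
          ∃ n' : ℕ, n ≤ n' ∧ n' ≤ 2 * n ∧
            ∃ G₀ : SimpleGraph (Fin n'), G₀.IsRegularOfDegree d ∧
              ∃ s : Fin n' → Fin n' → H,
                (∀ u v, s v u = (s u v)⁻¹) ∧
                (liftGraph G₀ (fun u v => (s u v : Equiv.Perm (Fin ℓ)))).IsRegularOfDegree d ∧
                SndEigLE
                  ((liftGraph G₀ (fun u v => (s u v : Equiv.Perm (Fin ℓ)))).adjMatrix ℝ)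
                  (ε * d) := by
  obtain ⟨θ, hθ, hθ1, hθε⟩ : ∃ θ : ℝ, 0 < θ ∧ θ ≤ 1 ∧ 14 * θ ≤ ε :=
    ⟨min (ε / 14) 1, by positivity, min_le_right _ _, by linarith [min_le_left (ε / 14) 1]⟩
  have hη : 0 < (θ * truncationLevel θ) ^ 2 := by have := truncationLevel_pos hθ; positivity
  obtain ⟨d₀, hd₀⟩ := exists_nat_ge (384 / (θ * truncationLevel θ) ^ 2)
  refine ⟨d₀, fun d hd n hn ℓ hℓ hℓexp H htrans hcomm => ?_⟩
  have hd384 : 384 ≤ (θ * truncationLevel θ) ^ 2 * d :=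
    (div_le_iff₀' hη).1 (hd₀.trans (Nat.cast_le.2 hd))
  obtain ⟨m, hm, hle, hge⟩ := exists_succ_mul_between hn
  have : Nonempty (Fin ((d + 1) * m)) := ⟨⟨0, by positivity⟩⟩
  obtain ⟨G₀, hreg, hsparse, hspec⟩ := exists_locallySparse_sndEigLE_graph hθ hθ1 hd384 hm
  obtain ⟨s, hinv, hlift⟩ := exists_signing_sndEigLE_liftGraph hθ hθ1 hd384 hreg hsparse
    (hspec.mono (by gcongr; norm_num)) hℓ
    (hℓexp.trans (Real.exp_le_exp.2 (by rw [Fintype.card_fin]; exact_mod_cast hle))) htrans hcomm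
  exact ⟨_, hle, hge, G₀, hreg, s, hinv,
    isRegularOfDegree_liftGraph hreg fun u v => congrArg Subtype.val (hinv u v),
    hlift.mono (by gcongr)⟩

/-- Moderately-exponential regime: explicit abelian lifts with `λ(G) ≤ ε·d`. -/
theorem stmt1 :
    ∃ δ₀ : ℝ, 0 < δ₀ ∧ δ₀ < 1 ∧
      ∀ ε : ℝ, 0 < ε → ε < 1 →
        ∃ d₀ : ℕ, ∀ d : ℕ, d₀ ≤ d →
          ∃ N : ℕ, ∀ n : ℕ, N ≤ n →
            ∀ ℓ : ℕ, 2 ≤ ℓ → (ℓ : ℝ) ≤ Real.exp ((n : ℝ) ^ δ₀) →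
              ∀ H : Subgroup (Equiv.Perm (Fin ℓ)),
                (∀ i j : Fin ℓ, ∃ h ∈ H, h i = j) →
                (∀ a b : H, a * b = b * a) →
                ∃ n' : ℕ, n ≤ n' ∧ n' ≤ 2 * n ∧
                  ∃ G₀ : SimpleGraph (Fin n'), G₀.IsRegularOfDegree d ∧
                    ∃ s : Fin n' → Fin n' → H,
                      (∀ u v, s v u = (s u v)⁻¹) ∧
                      (liftGraph G₀ (fun u v => (s u v : Equiv.Perm (Fin ℓ)))).IsRegularOfDegree d ∧
                      SndEigLE
                        ((liftGraph G₀ (fun u v => (s u v : Equiv.Perm (Fin ℓ)))).adjMatrix ℝ)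
                        (ε * d) := by
  refine ⟨1 / 2, by norm_num, by norm_num, fun ε hε _ => ?_⟩
  obtain ⟨d₀, hd₀⟩ := stmt1_general ε hε
  refine ⟨d₀, fun d hd => ⟨d + 1, fun n hn ℓ hℓ hℓexp => ?_⟩⟩
  have hn1 : (1 : ℝ) ≤ n := by exact_mod_cast (Nat.succ_pos d).trans_le hn
  exact hd₀ d hd n hn ℓ (by omega) (hℓexp.trans (Real.exp_le_exp.2
    (Real.rpow_le_self_of_one_le hn1 (by norm_num))))
end
end

section
/- Let H be a finite connected graph that is bicycle-free at radius r, where r ≥ 10·ln(|V(H)|). Then exc(H) ≤ (ln(e·|V(H)|)/r)·|V(H)|. -/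
open scoped Classical

noncomputable section

/-- The ball of radius `r` about `v` in `G` (within the connected component of `v`). -/
def gBall {V : Type*} (G : SimpleGraph V) (v : V) (r : ℕ) : Set V :=
  {u | G.Reachable v u ∧ G.dist v u ≤ r}

/-- `G` is bicycle-free at radius `r`: the subgraph induced on every ball of radius `r`
has excess at most `0`, i.e. at most as many edges as vertices. -/
def BicycleFree {V : Type*} (G : SimpleGraph V) (r : ℕ) : Prop :=
  ∀ v : V,
    (G.edgeSet ∩ {e : Sym2 V | ∀ x ∈ e, x ∈ gBall G v r}).ncard ≤ (gBall G v r).ncard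

/-!
Delete leaves until no vertex has degree `1`. This does not decrease the number of edges minus the
number of non-isolated vertices, and bicycle-freeness survives because the excess of a subset of a
ball is at most that of the ball. In the remaining graph, concavity of `log` shows that the sum over
all darts of the logarithm of the number of non-backtracking walks of length `r` continuing the
dart grows by at least four times the excess with every step. On the other hand such walks stay in a
ball, a pseudoforest, where at most two non-backtracking walks of given length join two given
vertices, so each dart has at most `2 |V|` continuations. Comparing the two bounds gives
`2 r (|E| - |V|) ≤ |E| log (2 |V|)`, from which the theorem follows by arithmetic.
-/

section InducedOn

variable {V : Type*} {G H : SimpleGraph V} {S B : Set V}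

/-- The subgraph of `G` induced on `S`, kept on the vertex type of `G`: the vertices outside `S`
become isolated. Staying on one type makes induced subgraphs comparable in the lattice of graphs. -/
def inducedOn (G : SimpleGraph V) (S : Set V) : SimpleGraph V :=
  (G.induce S).spanningCoe

theorem inducedOn_adj {u v : V} : (inducedOn G S).Adj u v ↔ G.Adj u v ∧ u ∈ S ∧ v ∈ S := by
  simp only [inducedOn, SimpleGraph.map_adj, SimpleGraph.comap_adj,
    Function.Embedding.subtype_apply, Subtype.exists]
  aesop

theorem inducedOn_le (G : SimpleGraph V) (S : Set V) : inducedOn G S ≤ G :=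
  G.spanningCoe_induce_le S

theorem inducedOn_empty (G : SimpleGraph V) : inducedOn G ∅ = ⊥ := by
  ext u v
  simp [inducedOn_adj]

theorem edgeSet_inducedOn (G : SimpleGraph V) (S : Set V) :
    (inducedOn G S).edgeSet = G.edgeSet ∩ {e | ∀ x ∈ e, x ∈ S} := by
  ext e
  induction e with
  | _ u v => simp [inducedOn_adj]

theorem ncard_edgeSet_le_of_le [Finite V] (h : H ≤ G) : H.edgeSet.ncard ≤ G.edgeSet.ncard :=
  Set.ncard_le_ncard (SimpleGraph.edgeSet_mono h)

theorem exists_adj_dist_lt {u v : V} (h : G.Reachable v u) (hne : u ≠ v) :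
    ∃ w, G.Adj u w ∧ G.dist v w < G.dist v u := by
  obtain ⟨p, hp⟩ := h.symm.exists_walk_length_eq_dist
  cases p with
  | nil => exact absurd rfl hne
  | @cons _ w _ hadj q =>
    have hq : G.dist v w ≤ q.length := SimpleGraph.dist_comm (G := G) ▸ SimpleGraph.dist_le q
    rw [SimpleGraph.Walk.length_cons, SimpleGraph.dist_comm] at hp
    exact ⟨w, hadj, by omega⟩

/- Every vertex of `B \ S` owns the edge to its parent in a breadth-first search from `s`; these
edges are distinct and none of them lies inside `S`. -/
theorem ncard_edgeSet_inducedOn_add_ncard_diff_le [Finite V] {s : V} (hs : s ∈ S)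
    (hB : ∀ u ∈ B, G.Reachable s u) :
    (inducedOn G S).edgeSet.ncard + (B \ S).ncard ≤ G.edgeSet.ncard := by
  have exists_parent (u : V) (hu : u ∈ B \ S) : ∃ w, G.Adj u w ∧ G.dist s w < G.dist s u :=
    exists_adj_dist_lt (hB u hu.1) fun h ↦ hu.2 (h ▸ hs)
  choose! parent hadj hlt using exists_parent
  have parentEdge_injOn : Set.InjOn (fun u ↦ s(u, parent u)) (B \ S) := by
    intro u hu w hw huw
    rcases Sym2.eq_iff.1 huw with ⟨h, -⟩ | ⟨hu_eq, hw_eq⟩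
    · exact h
    · have hwu : G.dist s w < G.dist s u := hw_eq ▸ hlt u hu
      have huw : G.dist s u < G.dist s w := hu_eq ▸ hlt w hw
      exact absurd hwu huw.asymm
  have parentEdge_mem (u : V) (hu : u ∈ B \ S) :
      s(u, parent u) ∈ G.edgeSet \ (inducedOn G S).edgeSet :=
    ⟨hadj u hu, fun h ↦ hu.2 (inducedOn_adj.1 h).2.1⟩
  have hdiff := Set.ncard_le_ncard_of_injOn _ parentEdge_mem parentEdge_injOn
  have hsplit := Set.ncard_sdiff_add_ncard_of_subset
    (SimpleGraph.edgeSet_mono (inducedOn_le G S))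
  omega

end InducedOn

section Pseudoforest

variable {V : Type*} {G H : SimpleGraph V}

/-- Every set of vertices spans at most as many edges as it has elements; equivalently, every
connected component contains at most one cycle. -/
def IsPseudoforest (G : SimpleGraph V) : Prop :=
  ∀ S : Set V, (inducedOn G S).edgeSet.ncard ≤ S.ncard

theorem IsPseudoforest.anti [Finite V] (hG : IsPseudoforest G) (h : H ≤ G) : IsPseudoforest H :=
  fun S ↦ (ncard_edgeSet_le_of_le fun _ _ hadj ↦
    inducedOn_adj.2 ((inducedOn_adj.1 hadj).imp_left (h ·))).trans (hG S)

theorem gBall_subset_of_le (h : H ≤ G) (v : V) (r : ℕ) : gBall H v r ⊆ gBall G v r :=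
  fun _ hu ↦ ⟨hu.1.mono h, (hu.1.dist_anti h).trans hu.2⟩

theorem reachable_inducedOn_gBall {u v : V} {r : ℕ} (hu : u ∈ gBall G v r) :
    (inducedOn G (gBall G v r)).Reachable v u := by
  induction hd : G.dist v u using Nat.strong_induction_on generalizing u with
  | _ d ih =>
    by_cases huv : u = v
    · rw [huv]
    obtain ⟨w, hadj, hlt⟩ := exists_adj_dist_lt hu.1 huv
    have hw : w ∈ gBall G v r := ⟨hu.1.trans hadj.reachable, hlt.le.trans hu.2⟩
    exact (ih _ (hd ▸ hlt) hw rfl).trans (inducedOn_adj.2 ⟨hadj.symm, hw, hu⟩).reachable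

theorem BicycleFree.isPseudoforest_inducedOn_gBall [Finite V] {r : ℕ} (hG : BicycleFree G r)
    (v : V) : IsPseudoforest (inducedOn G (gBall G v r)) := by
  intro S
  set B := gBall G v r
  have hrestrict : inducedOn (inducedOn G B) S ≤ inducedOn (inducedOn G B) (S ∩ B) := by
    intro u w h
    obtain ⟨huw, hu, hw⟩ := inducedOn_adj.1 h
    obtain ⟨-, huB, hwB⟩ := inducedOn_adj.1 huw
    exact inducedOn_adj.2 ⟨huw, ⟨hu, huB⟩, hw, hwB⟩
  have hexcess : (inducedOn (inducedOn G B) (S ∩ B)).edgeSet.ncard ≤ (S ∩ B).ncard := by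
    rcases (S ∩ B).eq_empty_or_nonempty with hempty | ⟨s, hs⟩
    · simp [hempty, inducedOn_empty]
    have hball : (inducedOn G B).edgeSet.ncard ≤ B.ncard := edgeSet_inducedOn G B ▸ hG v
    have hsub : (inducedOn (inducedOn G B) (S ∩ B)).edgeSet.ncard + (B \ (S ∩ B)).ncard
        ≤ (inducedOn G B).edgeSet.ncard := ncard_edgeSet_inducedOn_add_ncard_diff_le hs fun u hu ↦
      (reachable_inducedOn_gBall hs.2).symm.trans (reachable_inducedOn_gBall hu)
    have hsplit := Set.ncard_sdiff_add_ncard_of_subset (Set.inter_subset_right : S ∩ B ⊆ B)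
    omega
  calc (inducedOn (inducedOn G B) S).edgeSet.ncard
      ≤ (inducedOn (inducedOn G B) (S ∩ B)).edgeSet.ncard := ncard_edgeSet_le_of_le hrestrict
    _ ≤ (S ∩ B).ncard := hexcess
    _ ≤ S.ncard := Set.ncard_le_ncard Set.inter_subset_left

theorem BicycleFree.anti [Finite V] {r : ℕ} (hG : BicycleFree G r) (h : H ≤ G) :
    BicycleFree H r := by
  intro v
  rw [← edgeSet_inducedOn]
  refine (ncard_edgeSet_le_of_le fun u w huw ↦ ?_).trans
    (hG.isPseudoforest_inducedOn_gBall v (gBall H v r))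
  obtain ⟨huw, hu, hw⟩ := inducedOn_adj.1 huw
  have hsub := gBall_subset_of_le h v r
  exact inducedOn_adj.2 ⟨inducedOn_adj.2 ⟨h huw, hsub hu, hsub hw⟩, hu, hw⟩

end Pseudoforest

section LeafDeletion

variable {V : Type*} {G : SimpleGraph V} {y z : V}

theorem ncard_support_deleteIncidenceSet_lt [Finite V] (hz : z ∈ G.support) :
    (G.deleteIncidenceSet z).support.ncard < G.support.ncard := by
  refine Set.ncard_lt_ncard ((Set.ssubset_iff_of_subset ?_).2 ⟨z, hz, ?_⟩)
  · exact SimpleGraph.support_mono (G.deleteIncidenceSet_le z)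
  · exact fun h ↦ (G.support_deleteIncidenceSet_subset z h).2 rfl

variable [Fintype V]

theorem leafDeletion_induction {P : SimpleGraph V → Prop}
    (core : ∀ G : SimpleGraph V, (∀ v, G.degree v ≠ 1) → P G)
    (leaf : ∀ (G : SimpleGraph V) (z y : V), G.neighborFinset z = {y} →
      P (G.deleteIncidenceSet z) → P G)
    (G : SimpleGraph V) : P G := by
  induction G using WellFoundedLT.induction with
  | _ G ih =>
    by_cases hcore : ∀ v, G.degree v ≠ 1
    · exact core G hcore
    push Not at hcore
    obtain ⟨z, hz⟩ := hcore
    obtain ⟨y, hy⟩ := Finset.card_eq_one.1 hz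
    have hzy : G.Adj z y := by simp [← G.mem_neighborFinset, hy]
    refine leaf G z y hy (ih _ (lt_of_le_not_ge (G.deleteIncidenceSet_le z) fun h ↦ ?_))
    exact (SimpleGraph.deleteIncidenceSet_adj.1 (h hzy)).2.1 rfl

theorem ncard_edgeSet_deleteIncidenceSet_add_degree (G : SimpleGraph V) (z : V) :
    (G.deleteIncidenceSet z).edgeSet.ncard + G.degree z = G.edgeSet.ncard := by
  rw [G.edgeSet_deleteIncidenceSet, ← G.card_incidenceSet_eq_degree, ← Nat.card_eq_fintype_card,
    Nat.card_coe_set_eq]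
  exact Set.ncard_sdiff_add_ncard_of_subset (G.incidenceSet_subset z)

theorem eq_of_adj_leaf (hz : G.neighborFinset z = {y}) {b : V} (hbz : G.Adj b z) : b = y := by
  simpa [hz] using (G.mem_neighborFinset z b).2 hbz.symm

end LeafDeletion

section Degree

variable {V : Type*} [Fintype V] {G : SimpleGraph V}

theorem sum_degree_sub_two_support (G : SimpleGraph V) :
    ∑ v ∈ G.support.toFinset, ((G.degree v : ℝ) - 2)
      = 2 * ((G.edgeSet.ncard : ℝ) - G.support.ncard) := by
  have hdegree : ∑ v ∈ G.support.toFinset, G.degree v = 2 * G.edgeSet.ncard := by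
    rw [Set.ncard_eq_toFinset_card', ← SimpleGraph.edgeFinset,
      ← G.sum_degrees_eq_twice_card_edges]
    refine Finset.sum_subset (Finset.subset_univ _) fun v _ hv ↦ ?_
    simpa [← G.degree_pos_iff_mem_support] using hv
  have hdegree' : ∑ v ∈ G.support.toFinset, (G.degree v : ℝ) = 2 * G.edgeSet.ncard := by
    exact_mod_cast hdegree
  rw [Finset.sum_sub_distrib, hdegree', Finset.sum_const, Set.ncard_eq_toFinset_card' G.support,
    nsmul_eq_mul]
  ring

theorem two_le_degree_of_mem_support (hG : ∀ v, G.degree v ≠ 1) {v : V} (hv : v ∈ G.support) :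
    2 ≤ G.degree v := by
  have := hG v
  have := (G.degree_pos_iff_mem_support v).2 hv
  omega

end Degree

section WalkCount

variable {V : Type*} [Fintype V] {G : SimpleGraph V} {y z : V}

/-- The number of non-backtracking walks `a, b, …, x` in `G` with `k` steps after `b`. Taking
`a = b` imposes no condition on the step after `b`, so `nbWalkCount G k b b x` counts all
non-backtracking walks of length `k` from `b` to `x`. -/
def nbWalkCount (G : SimpleGraph V) : ℕ → V → V → V → ℕ
  | 0, _, b, x => if x = b then 1 else 0
  | k + 1, a, b, x => ∑ c ∈ (G.neighborFinset b).erase a, nbWalkCount G k b c x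

theorem nbWalkCount_zero_le_one (a b x : V) : nbWalkCount G 0 a b x ≤ 1 := by
  simp only [nbWalkCount]
  split_ifs <;> simp

theorem nbWalkCount_leaf_eq_zero (hz : G.neighborFinset z = {y}) {k : ℕ} {x : V}
    (h : x ≠ z ∨ k ≠ 0) : nbWalkCount G k y z x = 0 := by
  cases k with
  | zero => simpa [nbWalkCount] using h
  | succ k => simp [nbWalkCount, hz]

theorem sum_neighborFinset_deleteIncidenceSet {a b : V} (hbz : b ≠ z) {f : V → ℕ}
    (hf : G.Adj b z → f z = 0) :
    ∑ c ∈ ((G.deleteIncidenceSet z).neighborFinset b).erase a, f c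
      = ∑ c ∈ (G.neighborFinset b).erase a, f c := by
  refine Finset.sum_subset (fun c ↦ ?_) fun c ↦ ?_
  · simp +contextual [SimpleGraph.deleteIncidenceSet_adj]
  · simp only [Finset.mem_erase, SimpleGraph.mem_neighborFinset, SimpleGraph.deleteIncidenceSet_adj]
    rintro ⟨hca, hbc⟩ hc
    obtain rfl : c = z := by by_contra hcz; exact hc ⟨hca, hbc, hbz, hcz⟩
    exact hf hbc

theorem nbWalkCount_deleteIncidenceSet_leaf (hz : G.neighborFinset z = {y}) {x : V} (hx : x ≠ z)
    (k : ℕ) (a : V) {b : V} (hb : b ≠ z) :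
    nbWalkCount G k a b x = nbWalkCount (G.deleteIncidenceSet z) k a b x := by
  induction k generalizing a b with
  | zero => rfl
  | succ k ih =>
    have hdead : G.Adj b z → nbWalkCount G k b z x = 0 := fun hbz ↦
      eq_of_adj_leaf hz hbz ▸ nbWalkCount_leaf_eq_zero hz (.inl hx)
    rw [nbWalkCount, nbWalkCount, ← sum_neighborFinset_deleteIncidenceSet hb hdead]
    refine Finset.sum_congr (by congr!) fun c hc ↦ ih b ?_
    simp only [Finset.mem_erase, SimpleGraph.mem_neighborFinset,
      SimpleGraph.deleteIncidenceSet_adj] at hc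
    exact hc.2.2.2

theorem nbWalkCount_succ_leaf_le (hz : G.neighborFinset z = {y}) (k : ℕ) (a : V) {b : V}
    (hb : b ≠ z) :
    nbWalkCount G (k + 1) a b z ≤ nbWalkCount (G.deleteIncidenceSet z) k a b y := by
  induction k generalizing a b with
  | zero =>
    by_cases hbz : G.Adj b z
    · simp only [nbWalkCount, eq_of_adj_leaf hz hbz, Finset.sum_ite_eq, if_true]
      split_ifs <;> simp
    · simp [nbWalkCount, hbz]
  | succ k ih =>
    have hdead : G.Adj b z → nbWalkCount G (k + 1) b z z = 0 := fun hbz ↦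
      eq_of_adj_leaf hz hbz ▸ nbWalkCount_leaf_eq_zero hz (.inr k.succ_ne_zero)
    rw [nbWalkCount, nbWalkCount,
      ← sum_neighborFinset_deleteIncidenceSet (f := (nbWalkCount G (k + 1) b · z)) hb hdead]
    refine (Finset.sum_le_sum fun c hc ↦ ih b ?_).trans_eq (by congr!)
    simp only [Finset.mem_erase, SimpleGraph.mem_neighborFinset,
      SimpleGraph.deleteIncidenceSet_adj] at hc
    exact hc.2.2.2

theorem nbWalkCount_le_one_of_degree_le_two (hG : ∀ v, G.degree v ≤ 2) (k : ℕ) {a b : V}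
    (hab : G.Adj a b) (x : V) : nbWalkCount G k a b x ≤ 1 := by
  induction k generalizing a b with
  | zero => exact nbWalkCount_zero_le_one a b x
  | succ k ih =>
    have hcard : ((G.neighborFinset b).erase a).card ≤ 1 := by
      rw [Finset.card_erase_of_mem (by simpa using hab.symm), G.card_neighborFinset_eq_degree]
      have := hG b
      omega
    refine (Finset.sum_le_card_nsmul _ _ 1 fun c hc ↦ ih ?_).trans (by simpa using hcard)
    simpa using Finset.mem_of_mem_erase hc

theorem nbWalkCount_le_two_of_degree_le_two (hG : ∀ v, G.degree v ≤ 2) (k : ℕ) (a b x : V) :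
    nbWalkCount G k a b x ≤ 2 := by
  cases k with
  | zero => exact (nbWalkCount_zero_le_one a b x).trans one_le_two
  | succ k =>
    have hcard : ((G.neighborFinset b).erase a).card ≤ 2 :=
      (Finset.card_erase_le).trans (hG b)
    refine (Finset.sum_le_card_nsmul _ _ 1 fun c hc ↦ ?_).trans (by simpa using hcard)
    exact nbWalkCount_le_one_of_degree_le_two hG k (by simpa using Finset.mem_of_mem_erase hc) x

theorem IsPseudoforest.degree_le_two (hG : IsPseudoforest G) (hdeg : ∀ v, G.degree v ≠ 1) (v : V) :
    G.degree v ≤ 2 := by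
  by_contra! hv
  have hsupport : v ∈ G.support := (G.degree_pos_iff_mem_support v).1 (by omega)
  have hpos : 0 < ∑ w ∈ G.support.toFinset, ((G.degree w : ℝ) - 2) := by
    refine Finset.sum_pos' (fun w hw ↦ ?_) ⟨v, by simpa using hsupport, ?_⟩
    · exact sub_nonneg.2 (mod_cast two_le_degree_of_mem_support hdeg (by simpa using hw))
    · exact sub_pos.2 (mod_cast hv)
  have hexcess : (G.edgeSet.ncard : ℝ) ≤ G.support.ncard := by
    have := hG G.support
    rw [inducedOn, SimpleGraph.spanningCoe_induce_support] at this
    exact_mod_cast this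
  rw [sum_degree_sub_two_support] at hpos
  linarith

theorem IsPseudoforest.nbWalkCount_le_two (hG : IsPseudoforest G) (k : ℕ) (a b x : V) :
    nbWalkCount G k a b x ≤ 2 := by
  induction G using leafDeletion_induction generalizing k a b x with
  | core G hdeg => exact nbWalkCount_le_two_of_degree_le_two (hG.degree_le_two hdeg) k a b x
  | leaf G z y hz ih =>
    have hstripped := ih (hG.anti (G.deleteIncidenceSet_le z))
    obtain _ | k := k
    · exact (nbWalkCount_zero_le_one a b x).trans one_le_two
    have of_ne_leaf (k : ℕ) (a b : V) (hb : b ≠ z) : nbWalkCount G k a b x ≤ 2 := by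
      by_cases hx : x = z
      · subst hx
        obtain _ | k := k
        · exact (nbWalkCount_zero_le_one a b x).trans one_le_two
        · exact (nbWalkCount_succ_leaf_le hz k a hb).trans (hstripped k a b y)
      · exact (nbWalkCount_deleteIncidenceSet_leaf hz hx k a hb).trans_le (hstripped k a b x)
    by_cases hb : b = z
    · subst hb
      have hyb : y ≠ b := by
        rintro rfl
        simpa using (G.mem_neighborFinset y y).1 (by simp [hz])
      calc nbWalkCount G (k + 1) a b x
          ≤ ∑ c ∈ G.neighborFinset b, nbWalkCount G k b c x :=
            Finset.sum_le_sum_of_subset (Finset.erase_subset _ _)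
        _ = nbWalkCount G k b y x := by rw [hz, Finset.sum_singleton]
        _ ≤ 2 := of_ne_leaf k b y hyb
    · exact of_ne_leaf (k + 1) a b hb

theorem nbWalkCount_inducedOn_gBall (x : V) {v : V} {r : ℕ} (k : ℕ) (a : V) {b : V}
    (hb : G.Reachable v b) (hk : G.dist v b + k ≤ r) :
    nbWalkCount (inducedOn G (gBall G v r)) k a b x = nbWalkCount G k a b x := by
  induction k generalizing a b with
  | zero => rfl
  | succ k ih =>
    have hdist {c : V} (hbc : G.Adj b c) : G.dist v c ≤ G.dist v b + 1 := by
      simpa [SimpleGraph.dist_eq_one_iff_adj.2 hbc] using hb.dist_triangle_left c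
    have hneighbors : (inducedOn G (gBall G v r)).neighborFinset b = G.neighborFinset b := by
      ext c
      simp only [SimpleGraph.mem_neighborFinset, inducedOn_adj, and_iff_left_iff_imp]
      intro hbc
      have := hdist hbc
      exact ⟨⟨hb, by omega⟩, hb.trans hbc.reachable, by omega⟩
    rw [nbWalkCount, nbWalkCount, hneighbors]
    refine Finset.sum_congr rfl fun c hc ↦ ?_
    have hbc : G.Adj b c := by simpa using Finset.mem_of_mem_erase hc
    have := hdist hbc
    exact ih b (hb.trans hbc.reachable) (by omega)

theorem BicycleFree.nbWalkCount_le_two {r : ℕ} (hG : BicycleFree G r) (a b x : V) :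
    nbWalkCount G r a b x ≤ 2 := by
  rw [← nbWalkCount_inducedOn_gBall (v := b) (r := r) x r a (.refl b) (by simp)]
  exact (hG.isPseudoforest_inducedOn_gBall b).nbWalkCount_le_two r a b x

/-- The number of non-backtracking walks `a, b, …` in `G` with `k` steps after `b`. -/
def nbWalkTotal (G : SimpleGraph V) (k : ℕ) (a b : V) : ℕ :=
  ∑ x, nbWalkCount G k a b x

theorem nbWalkTotal_zero (a b : V) : nbWalkTotal G 0 a b = 1 := by
  simp [nbWalkTotal, nbWalkCount]

theorem nbWalkTotal_succ (k : ℕ) (a b : V) :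
    nbWalkTotal G (k + 1) a b = ∑ c ∈ (G.neighborFinset b).erase a, nbWalkTotal G k b c := by
  simp only [nbWalkTotal, nbWalkCount]
  exact Finset.sum_comm

theorem BicycleFree.nbWalkTotal_le {r : ℕ} (hG : BicycleFree G r) (a b : V) :
    nbWalkTotal G r a b ≤ 2 * Fintype.card V := by
  refine (Finset.sum_le_card_nsmul _ _ 2 fun x _ ↦ hG.nbWalkCount_le_two a b x).trans_eq ?_
  simp [mul_comm]

theorem nbWalkTotal_pos (hG : ∀ v, G.degree v ≠ 1) (k : ℕ) {a b : V} (hab : G.Adj a b) :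
    0 < nbWalkTotal G k a b := by
  induction k generalizing a b with
  | zero => simp [nbWalkTotal_zero]
  | succ k ih =>
    rw [nbWalkTotal_succ]
    refine Finset.sum_pos (fun c hc ↦ ih (by simpa using Finset.mem_of_mem_erase hc)) ?_
    have hdegree := two_le_degree_of_mem_support hG ⟨a, hab.symm⟩
    rw [← Finset.card_pos, Finset.card_erase_of_mem (by simpa using hab.symm),
      G.card_neighborFinset_eq_degree]
    omega

end WalkCount

section Entropy

theorem card_mul_log_card_add_sum_log_le {ι : Type*} {s : Finset ι} (hs : s.Nonempty) {f : ι → ℝ}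
    (hf : ∀ i ∈ s, 0 < f i) :
    (s.card : ℝ) * Real.log s.card + ∑ i ∈ s, Real.log (f i)
      ≤ s.card * Real.log (∑ i ∈ s, f i) := by
  have hcard : (0 : ℝ) < s.card := by exact_mod_cast hs.card_pos
  have jensen : ∑ i ∈ s, (s.card : ℝ)⁻¹ • Real.log (f i)
      ≤ Real.log (∑ i ∈ s, (s.card : ℝ)⁻¹ • f i) :=
    strictConcaveOn_log_Ioi.concaveOn.le_map_sum (fun _ _ ↦ by positivity)
      (by simp [hcard.ne']) hf
  rw [← Finset.smul_sum, ← Finset.smul_sum, smul_eq_mul, smul_eq_mul,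
    Real.log_mul (inv_ne_zero hcard.ne') (Finset.sum_pos hf hs).ne', Real.log_inv,
    inv_mul_le_iff₀ hcard] at jensen
  linarith

/- Apply the previous inequality to each `A.erase a`; on summing over `a`, every `log (g c)` occurs
`A.card - 1` times. -/
theorem card_mul_log_pred_card_add_sum_log_le {ι : Type*} {A : Finset ι} (hA : 2 ≤ A.card)
    {g : ι → ℝ} (hg : ∀ c ∈ A, 0 < g c) :
    (A.card : ℝ) * Real.log ((A.card : ℝ) - 1) + ∑ c ∈ A, Real.log (g c)
      ≤ ∑ a ∈ A, Real.log (∑ c ∈ A.erase a, g c) := by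
  have hpred : (0 : ℝ) < (A.card : ℝ) - 1 := by
    have : (2 : ℝ) ≤ A.card := by exact_mod_cast hA
    linarith
  have herase (a : ι) (ha : a ∈ A) :
      ((A.card : ℝ) - 1) * Real.log ((A.card : ℝ) - 1)
          + (∑ c ∈ A, Real.log (g c) - Real.log (g a))
        ≤ ((A.card : ℝ) - 1) * Real.log (∑ c ∈ A.erase a, g c) := by
    have hcard : (A.erase a).card = A.card - 1 := Finset.card_erase_of_mem ha
    have h := card_mul_log_card_add_sum_log_le (s := A.erase a)
      (Finset.card_pos.1 (by omega)) fun i hi ↦ hg i (Finset.mem_of_mem_erase hi)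
    rwa [hcard, Nat.cast_sub (by omega), Nat.cast_one, Finset.sum_erase_eq_sub ha] at h
  have hsum := Finset.sum_le_sum herase
  rw [Finset.sum_add_distrib, Finset.sum_sub_distrib, ← Finset.mul_sum, ← Finset.mul_sum,
    Finset.sum_const, Finset.sum_const, nsmul_eq_mul, nsmul_eq_mul] at hsum
  refine le_of_mul_le_mul_left ?_ hpred
  linarith

theorem two_mul_sub_two_le_mul_log_sub_one {d : ℝ} (hd : 2 ≤ d) :
    2 * (d - 2) ≤ d * Real.log (d - 1) := by
  have h := Real.le_log_one_add_of_nonneg (x := d - 2) (by linarith)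
  rwa [show d - 2 + 2 = d by ring, show 1 + (d - 2) = d - 1 by ring,
    div_le_iff₀' (by linarith)] at h

variable {V : Type*} [Fintype V] {G : SimpleGraph V}

/-- The sum over the darts `(a, b)` of `G` of the logarithm of the number of non-backtracking walks
that continue the dart by `k` steps. -/
def nbWalkEntropy (G : SimpleGraph V) (k : ℕ) : ℝ :=
  ∑ a, ∑ b ∈ G.neighborFinset a, Real.log (nbWalkTotal G k a b)

theorem nbWalkEntropy_eq_sum_swap (G : SimpleGraph V) (k : ℕ) :
    nbWalkEntropy G k = ∑ b, ∑ a ∈ G.neighborFinset b, Real.log (nbWalkTotal G k a b) :=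
  Finset.sum_comm' fun a b ↦ by simp [G.adj_comm a b]

theorem nbWalkEntropy_succ_ge (hG : ∀ v, G.degree v ≠ 1) (k : ℕ) :
    4 * ((G.edgeSet.ncard : ℝ) - G.support.ncard) + nbWalkEntropy G k
      ≤ nbWalkEntropy G (k + 1) := by
  have at_vertex (b : V) :
      (if b ∈ G.support.toFinset then 2 * ((G.degree b : ℝ) - 2) else 0)
          + ∑ c ∈ G.neighborFinset b, Real.log (nbWalkTotal G k b c)
        ≤ ∑ a ∈ G.neighborFinset b, Real.log (nbWalkTotal G (k + 1) a b) := by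
    split_ifs with hb
    · have hdegree := two_le_degree_of_mem_support hG (by simpa using hb)
      have hstep := card_mul_log_pred_card_add_sum_log_le (A := G.neighborFinset b)
        (g := fun c ↦ (nbWalkTotal G k b c : ℝ)) hdegree
        fun c hc ↦ by exact_mod_cast nbWalkTotal_pos hG k (by simpa using hc)
      have hlog := two_mul_sub_two_le_mul_log_sub_one (d := G.degree b) (by exact_mod_cast hdegree)
      simp only [nbWalkTotal_succ, Nat.cast_sum]
      rw [G.card_neighborFinset_eq_degree] at hstep
      linarith
    · have hempty : G.neighborFinset b = ∅ := by
        rw [← Finset.card_eq_zero, G.card_neighborFinset_eq_degree]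
        simpa [← G.degree_pos_iff_mem_support] using hb
      simp [hempty]
  have hsum := Finset.sum_le_sum fun b (_ : b ∈ Finset.univ) ↦ at_vertex b
  rw [Finset.sum_add_distrib, Finset.sum_ite_mem, Finset.univ_inter, ← Finset.mul_sum,
    sum_degree_sub_two_support, ← nbWalkEntropy_eq_sum_swap] at hsum
  rw [nbWalkEntropy]
  linarith

theorem mul_excess_le_nbWalkEntropy (hG : ∀ v, G.degree v ≠ 1) (k : ℕ) :
    k * (4 * ((G.edgeSet.ncard : ℝ) - G.support.ncard)) ≤ nbWalkEntropy G k := by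
  induction k with
  | zero => simp [nbWalkEntropy, nbWalkTotal_zero]
  | succ k ih =>
    have := nbWalkEntropy_succ_ge hG k
    push_cast
    linarith

theorem BicycleFree.nbWalkEntropy_le {r : ℕ} (hG : BicycleFree G r) (hdeg : ∀ v, G.degree v ≠ 1) :
    nbWalkEntropy G r ≤ 2 * G.edgeSet.ncard * Real.log (2 * Fintype.card V) := by
  have hdart (a b : V) (hb : b ∈ G.neighborFinset a) :
      Real.log (nbWalkTotal G r a b) ≤ Real.log (2 * Fintype.card V) :=
    Real.log_le_log (by exact_mod_cast nbWalkTotal_pos hdeg r (by simpa using hb))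
      (by exact_mod_cast hG.nbWalkTotal_le a b)
  calc nbWalkEntropy G r
      ≤ ∑ a, (G.degree a : ℝ) * Real.log (2 * Fintype.card V) :=
        Finset.sum_le_sum fun a _ ↦ by
          simpa using Finset.sum_le_card_nsmul _ _ _ (hdart a)
    _ = 2 * G.edgeSet.ncard * Real.log (2 * Fintype.card V) := by
        rw [← Finset.sum_mul, ← Nat.cast_sum, G.sum_degrees_eq_twice_card_edges,
          Set.ncard_eq_toFinset_card', SimpleGraph.edgeFinset, Nat.cast_mul, Nat.cast_two]

end Entropy

section ExcessBound

variable {V : Type*} [Fintype V] {G : SimpleGraph V} {r : ℕ}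

theorem BicycleFree.two_mul_sub_ncard_support_le (hG : BicycleFree G r) :
    2 * r * ((G.edgeSet.ncard : ℝ) - G.support.ncard)
      ≤ G.edgeSet.ncard * Real.log (2 * Fintype.card V) := by
  induction G using leafDeletion_induction with
  | core G hdeg =>
    linarith [mul_excess_le_nbWalkEntropy hdeg r, hG.nbWalkEntropy_le hdeg]
  | leaf G z y hz ih =>
    have hzy : G.Adj z y := by simp [← G.mem_neighborFinset, hz]
    have hedges : ((G.deleteIncidenceSet z).edgeSet.ncard : ℝ) + 1 = G.edgeSet.ncard := by
      rw [← ncard_edgeSet_deleteIncidenceSet_add_degree G z, ← G.card_neighborFinset_eq_degree, hz,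
        Finset.card_singleton, Nat.cast_add, Nat.cast_one]
    have hsupport : ((G.deleteIncidenceSet z).support.ncard : ℝ) + 1 ≤ G.support.ncard := by
      exact_mod_cast ncard_support_deleteIncidenceSet_lt ⟨y, hzy⟩
    have hlog : 0 ≤ Real.log (2 * Fintype.card V) := by
      have : 0 < Fintype.card V := Fintype.card_pos_iff.2 ⟨z⟩
      exact Real.log_nonneg (by exact_mod_cast (by omega : 1 ≤ 2 * Fintype.card V))
    calc 2 * r * ((G.edgeSet.ncard : ℝ) - G.support.ncard)
        ≤ 2 * r * ((G.deleteIncidenceSet z).edgeSet.ncard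
            - (G.deleteIncidenceSet z).support.ncard) :=
          mul_le_mul_of_nonneg_left (by linarith) (by positivity)
      _ ≤ (G.deleteIncidenceSet z).edgeSet.ncard * Real.log (2 * Fintype.card V) :=
          ih (hG.anti (G.deleteIncidenceSet_le z))
      _ ≤ G.edgeSet.ncard * Real.log (2 * Fintype.card V) :=
          mul_le_mul_of_nonneg_right (by linarith) hlog

theorem BicycleFree.two_mul_excess_le (hG : BicycleFree G r) :
    2 * r * ((G.edgeSet.ncard : ℝ) - Fintype.card V)
      ≤ G.edgeSet.ncard * Real.log (2 * Fintype.card V) := by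
  refine le_trans ?_ hG.two_mul_sub_ncard_support_le
  have hsupport : G.support.ncard ≤ Fintype.card V :=
    Nat.card_eq_fintype_card (α := V) ▸ Set.ncard_le_card _
  gcongr

theorem log_exp_one_mul_natCast_nonneg (n : ℕ) : 0 ≤ Real.log (Real.exp 1 * n) := by
  rcases n.eq_zero_or_pos with rfl | hn
  · simp
  · rw [Real.log_mul (Real.exp_pos 1).ne' (by positivity), Real.log_exp]
    positivity

theorem BicycleFree.mul_excess_le (hG : BicycleFree G r)
    (hr : Real.log (Real.exp 1 * Fintype.card V) ≤ r) :
    r * ((G.edgeSet.ncard : ℝ) - Fintype.card V)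
      ≤ Real.log (Real.exp 1 * Fintype.card V) * Fintype.card V := by
  set M := Real.log (Real.exp 1 * Fintype.card V)
  set x := (G.edgeSet.ncard : ℝ) - Fintype.card V with hx
  have hM : 0 ≤ M := log_exp_one_mul_natCast_nonneg _
  rcases le_total x 0 with hx0 | hx0
  · exact (mul_nonpos_of_nonneg_of_nonpos (by positivity) hx0).trans (by positivity)
  have hlog : Real.log (2 * Fintype.card V) ≤ M := by
    rcases (Fintype.card V).eq_zero_or_pos with hV | hV
    · simpa [hV] using hM
    · refine Real.log_le_log (by positivity) ?_
      gcongr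
      linarith [Real.add_one_le_exp 1]
  have hmoore : 2 * r * x ≤ M * Fintype.card V + r * x := calc
    2 * r * x ≤ G.edgeSet.ncard * Real.log (2 * Fintype.card V) := hG.two_mul_excess_le
    _ ≤ G.edgeSet.ncard * M := by gcongr
    _ = M * Fintype.card V + M * x := by rw [hx]; ring
    _ ≤ M * Fintype.card V + r * x := by gcongr
  linarith

theorem ncard_edgeSet_le_card_of_card_le_three (hV : Fintype.card V ≤ 3) :
    G.edgeSet.ncard ≤ Fintype.card V := by
  rw [Set.ncard_eq_toFinset_card', ← SimpleGraph.edgeFinset]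
  refine G.card_edgeFinset_le_card_choose_two.trans ?_
  interval_cases Fintype.card V <;> decide

end ExcessBound

theorem stmt6_general {V : Type*} [Fintype V] (G : SimpleGraph V) {r : ℕ} (hbf : BicycleFree G r)
    (hr : 2 * Real.log (Fintype.card V) ≤ (r : ℝ)) :
    (G.edgeSet.ncard : ℝ) - (Fintype.card V : ℝ)
      ≤ (Real.log (Real.exp 1 * (Fintype.card V : ℝ)) / (r : ℝ)) * (Fintype.card V : ℝ) := by
  rcases le_or_gt (Fintype.card V) 3 with hsmall | hlarge
  · have hedges : (G.edgeSet.ncard : ℝ) ≤ Fintype.card V :=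
      mod_cast ncard_edgeSet_le_card_of_card_le_three hsmall
    have hlog := log_exp_one_mul_natCast_nonneg (Fintype.card V)
    exact (sub_nonpos.2 hedges).trans (by positivity)
  · have hcard : (3 : ℝ) < Fintype.card V := mod_cast hlarge
    have hlog : 1 ≤ Real.log (Fintype.card V) :=
      (Real.le_log_iff_exp_le (by linarith)).2 (by linarith [Real.exp_one_lt_d9])
    have hlog_exp_mul : Real.log (Real.exp 1 * Fintype.card V) ≤ r := by
      rw [Real.log_mul (Real.exp_pos 1).ne' (by linarith), Real.log_exp]
      linarith
    rw [div_mul_eq_mul_div, le_div_iff₀' (by linarith)]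
    exact hbf.mul_excess_le hlog_exp_mul

/-- Excess bound for connected graphs that are bicycle-free at radius `r ≥ 10·ln |V|`. -/
theorem stmt6 {V : Type*} [Fintype V] (G : SimpleGraph V) (hconn : G.Connected)
    {r : ℕ} (hbf : BicycleFree G r)
    (hr : 10 * Real.log (Fintype.card V) ≤ (r : ℝ)) :
    (G.edgeSet.ncard : ℝ) - (Fintype.card V : ℝ)
      ≤ (Real.log (Real.exp 1 * (Fintype.card V : ℝ)) / (r : ℝ)) * (Fintype.card V : ℝ) :=
  stmt6_general G hbf (by linarith [Real.log_natCast_nonneg (Fintype.card V)])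
end
end
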